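/- arXiv:1308.6817 — 4 statements merged into one kernel-verified Lean document; each statement's English description precedes it below -/
import Mathlib

section
/- Let f : Mₙ(ℂ) → ℂ be a continuous function on the space of n×n complex matrices. Then ∫_{U(n)} f(U) dH(U) = lim_{ε→0⁺} ( ∫_{{X : ‖X*X − I‖ < ε}} f(X) dX ) / ( ∫_{{X : ‖X*X − I‖ < ε}} dX ), where H is the Haar probability measure on the unitary group U(n), ‖·‖ is the Frobenius norm, and dX denotes Lebesgue measure on Mₙ(ℂ) ≅ ℝ^{2n²} (the sets {X : ‖X*X − I‖ < ε} have finite positive Lebesgue measure for small ε > 0). -/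
/-! The neighbourhood `A ε = {X : ‖X*X - I‖ < ε}` is bounded, open, contains `I`, and is
invariant under right multiplication by a unitary `V`, because
`(XV)*(XV) - I = V*(X*X - I)V` and the Frobenius norm is unitarily invariant. Right
multiplication by `V` rescales Lebesgue measure by a constant, and this constant is `1` since
`A 1` is mapped to itself and has finite positive measure. Hence `∫_{A ε} f(X) dX` equals
`∫_{A ε} f(XV) dX` for each unitary `V`; averaging over `V` with respect to `μ` and exchanging
the integrals turns it into `∫_{A ε} F(X) dX`, where `F(X) = ∫ f(XV) dμ(V)`
(`setIntegral_nbhd_eq`).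

The function `F` is continuous, and by left invariance of `μ` it is constant on unitary
matrices, equal to `c = ∫ f dμ`. By compactness, `F` is uniformly close to `c` on `A ε` once
`ε` is small (`exists_nbhd_close`), so the average of `F` over `A ε` tends to `c`. -/

open MeasureTheory Filter Matrix

noncomputable section

/-- `μ` is the Haar probability measure of the unitary group `U(n)`, viewed as a measure on
the space of `n × n` complex matrices: a probability measure carried by the set of unitary
matrices and invariant under left multiplication by every unitary matrix. -/
def IsHaarUnitary (n : ℕ) (μ : Measure (Fin n → Fin n → ℂ)) : Prop :=
  IsProbabilityMeasure μ ∧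
    μ {U | Matrix.of U ∈ Matrix.unitaryGroup (Fin n) ℂ} = 1 ∧
    ∀ V ∈ Matrix.unitaryGroup (Fin n) ℂ,
      Measure.map (fun U => fun i j => (V * Matrix.of U) i j) μ = μ

/-- The Frobenius norm `‖M‖ = √(tr (M* M))` of an `n × n` complex matrix. -/
def frobNorm (n : ℕ) (M : Matrix (Fin n) (Fin n) ℂ) : ℝ :=
  Real.sqrt (Matrix.trace (Mᴴ * M)).re

/-- The set `{X : ‖X*X - I‖ < ε}`. -/
def unitaryNbhd (n : ℕ) (ε : ℝ) : Set (Fin n → Fin n → ℂ) :=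
  {X | frobNorm n ((Matrix.of X)ᴴ * Matrix.of X - 1) < ε}

/-- The set of unitary matrices, inside the space of arrays of entries. -/
def unitarySet (n : ℕ) : Set (Fin n → Fin n → ℂ) :=
  {U | Matrix.of U ∈ Matrix.unitaryGroup (Fin n) ℂ}

/-- The matrix product `X V` on arrays of entries. -/
def arrMul (n : ℕ) (X V : Fin n → Fin n → ℂ) : Fin n → Fin n → ℂ :=
  fun i j => (Matrix.of X * Matrix.of V) i j

lemma re_trace_conjTranspose_mul_self (n : ℕ) (M : Matrix (Fin n) (Fin n) ℂ) :
    (Matrix.trace (Mᴴ * M)).re = ∑ j, ∑ i, ‖M i j‖ ^ 2 := by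
  simp only [Matrix.trace, Matrix.diag, Matrix.mul_apply, Matrix.conjTranspose_apply,
    Complex.re_sum]
  refine Finset.sum_congr rfl fun j _ => Finset.sum_congr rfl fun i _ => ?_
  rw [← Complex.normSq_eq_norm_sq, Complex.normSq_apply]
  simp

lemma norm_entry_le_frobNorm (n : ℕ) (M : Matrix (Fin n) (Fin n) ℂ) (i j : Fin n) :
    ‖M i j‖ ≤ frobNorm n M := by
  unfold frobNorm
  rw [re_trace_conjTranspose_mul_self]
  apply Real.le_sqrt_of_sq_le
  calc ‖M i j‖ ^ 2 ≤ ∑ i, ‖M i j‖ ^ 2 :=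
        Finset.single_le_sum (f := fun i => ‖M i j‖ ^ 2) (fun _ _ => by positivity)
          (Finset.mem_univ i)
    _ ≤ ∑ j, ∑ i, ‖M i j‖ ^ 2 :=
        Finset.single_le_sum (f := fun j => ∑ i, ‖M i j‖ ^ 2) (fun _ _ => by positivity)
          (Finset.mem_univ j)

lemma eq_zero_of_frobNorm_le_zero (n : ℕ) (M : Matrix (Fin n) (Fin n) ℂ)
    (h : frobNorm n M ≤ 0) : M = 0 := by
  ext i j
  exact norm_le_zero_iff.mp ((norm_entry_le_frobNorm n M i j).trans h)

lemma continuous_frobNorm_defect (n : ℕ) :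
    Continuous fun X : Fin n → Fin n → ℂ =>
      frobNorm n ((Matrix.of X)ᴴ * Matrix.of X - 1) := by
  have h : Continuous fun X : Fin n → Fin n → ℂ => (Matrix.of X : Matrix (Fin n) (Fin n) ℂ) :=
    continuous_id
  unfold frobNorm
  fun_prop

lemma continuous_arrMul (n : ℕ) :
    Continuous fun p : (Fin n → Fin n → ℂ) × (Fin n → Fin n → ℂ) => arrMul n p.1 p.2 := by
  unfold arrMul
  simp only [Matrix.mul_apply, Matrix.of_apply]
  fun_prop

lemma isOpen_unitaryNbhd (n : ℕ) (ε : ℝ) : IsOpen (unitaryNbhd n ε) :=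
  isOpen_lt (continuous_frobNorm_defect n) continuous_const

lemma unitarySet_subset_nbhd (n : ℕ) {ε : ℝ} (hε : 0 < ε) :
    unitarySet n ⊆ unitaryNbhd n ε := by
  intro U hU
  have h : (Matrix.of U)ᴴ * Matrix.of U = 1 := Matrix.mem_unitaryGroup_iff'.mp hU
  simpa [unitaryNbhd, h, frobNorm] using hε

lemma mem_unitarySet_of_defect_le (n : ℕ) {X : Fin n → Fin n → ℂ}
    (h : frobNorm n ((Matrix.of X)ᴴ * Matrix.of X - 1) ≤ 0) : X ∈ unitarySet n :=
  Matrix.mem_unitaryGroup_iff'.mpr (sub_eq_zero.mp (eq_zero_of_frobNorm_le_zero n _ h))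

/-- The `j`-th diagonal entry of `X*X` is the squared length of the `j`-th column, so it is
less than `2` on `{X : ‖X*X - I‖ < 1}`. -/
lemma unitaryNbhd_subset_closedBall (n : ℕ) {ε : ℝ} (hε : ε ≤ 1) :
    unitaryNbhd n ε ⊆ Metric.closedBall 0 2 := by
  intro X hX
  have hX' : frobNorm n ((Matrix.of X)ᴴ * Matrix.of X - 1) < ε := hX
  rw [mem_closedBall_zero_iff, pi_norm_le_iff_of_nonneg (by norm_num)]
  intro i
  rw [pi_norm_le_iff_of_nonneg (by norm_num)]
  intro j
  have h1 := norm_entry_le_frobNorm n ((Matrix.of X)ᴴ * Matrix.of X - 1) j j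
  have h2 : ((Matrix.of X)ᴴ * Matrix.of X - 1) j j
      = ((∑ k, ‖X k j‖ ^ 2 - 1 : ℝ) : ℂ) := by
    simp [Matrix.mul_apply, Complex.conj_mul']
  rw [h2, Complex.norm_real, Real.norm_eq_abs] at h1
  have h3 : ‖X i j‖ ^ 2 ≤ ∑ k, ‖X k j‖ ^ 2 :=
    Finset.single_le_sum (f := fun k => ‖X k j‖ ^ 2) (fun _ _ => by positivity)
      (Finset.mem_univ i)
  have h4 := le_abs_self (∑ k, ‖X k j‖ ^ 2 - 1 : ℝ)
  nlinarith [norm_nonneg (X i j)]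

lemma unitarySet_subset_closedBall (n : ℕ) : unitarySet n ⊆ Metric.closedBall 0 2 :=
  (unitarySet_subset_nbhd n one_pos).trans (unitaryNbhd_subset_closedBall n le_rfl)

lemma isCompact_unitarySet (n : ℕ) : IsCompact (unitarySet n) := by
  have : unitarySet n
      = {X | frobNorm n ((Matrix.of X)ᴴ * Matrix.of X - 1) ≤ 0} := by
    ext X
    refine ⟨fun hX => ?_, fun h => mem_unitarySet_of_defect_le n h⟩
    exact le_of_forall_gt fun ε hε => unitarySet_subset_nbhd n hε hX
  refine (isCompact_closedBall (0 : Fin n → Fin n → ℂ) 2).of_isClosed_subset ?_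
    (unitarySet_subset_closedBall n)
  rw [this]
  exact isClosed_le (continuous_frobNorm_defect n) continuous_const

lemma isAddHaarMeasure_volume (n : ℕ) :
    (volume : Measure (Fin n → Fin n → ℂ)).IsAddHaarMeasure := by
  have hrow : (volume : Measure (Fin n → ℂ)).IsAddHaarMeasure :=
    Measure.pi.isAddHaarMeasure _
  exact Measure.pi.isAddHaarMeasure _

lemma volume_unitaryNbhd_pos (n : ℕ) {ε : ℝ} (hε : 0 < ε) :
    0 < volume (unitaryNbhd n ε) := by
  have hne : (unitaryNbhd n ε).Nonempty :=
    ⟨fun i j => (1 : Matrix (Fin n) (Fin n) ℂ) i j, unitarySet_subset_nbhd n hε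
      (one_mem (Matrix.unitaryGroup (Fin n) ℂ))⟩
  have := isAddHaarMeasure_volume n
  exact (isOpen_unitaryNbhd n ε).measure_pos volume hne

lemma volume_unitaryNbhd_lt_top (n : ℕ) {ε : ℝ} (hε : ε ≤ 1) :
    volume (unitaryNbhd n ε) < ⊤ :=
  (measure_mono (unitaryNbhd_subset_closedBall n hε)).trans_lt measure_closedBall_lt_top

/-- `{X : ‖X*X - I‖ < ε}` is invariant under right multiplication by unitaries. -/
lemma arrMul_mem_unitaryNbhd_iff (n : ℕ) (ε : ℝ) {V : Fin n → Fin n → ℂ}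
    (hV : V ∈ unitarySet n) (X : Fin n → Fin n → ℂ) :
    arrMul n X V ∈ unitaryNbhd n ε ↔ X ∈ unitaryNbhd n ε := by
  have h1 : (Matrix.of V)ᴴ * Matrix.of V = 1 := Matrix.mem_unitaryGroup_iff'.mp hV
  have h2 : Matrix.of V * (Matrix.of V)ᴴ = 1 := Matrix.mem_unitaryGroup_iff.mp hV
  have h3 : Matrix.of (arrMul n X V) = Matrix.of X * Matrix.of V := rfl
  have key : ∀ W M : Matrix (Fin n) (Fin n) ℂ, Wᴴ * W = 1 → W * Wᴴ = 1 →
      frobNorm n ((M * W)ᴴ * (M * W) - 1) = frobNorm n (Mᴴ * M - 1) := by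
    intro W M hW hW'
    have e1 : (M * W)ᴴ * (M * W) - 1 = Wᴴ * (Mᴴ * M - 1) * W := by
      rw [Matrix.mul_sub, Matrix.sub_mul, Matrix.mul_one, hW, Matrix.conjTranspose_mul]
      simp only [Matrix.mul_assoc]
    have e2 : ∀ N : Matrix (Fin n) (Fin n) ℂ,
        (Wᴴ * N * W)ᴴ * (Wᴴ * N * W) = Wᴴ * (Nᴴ * N * W) := by
      intro N
      calc (Wᴴ * N * W)ᴴ * (Wᴴ * N * W) = Wᴴ * Nᴴ * (W * Wᴴ) * N * W := by
            simp only [Matrix.conjTranspose_mul, Matrix.conjTranspose_conjTranspose,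
              Matrix.mul_assoc]
        _ = _ := by rw [hW']; simp only [Matrix.mul_one, Matrix.mul_assoc]
    unfold frobNorm
    rw [e1, e2, Matrix.trace_mul_comm, Matrix.mul_assoc, hW', Matrix.mul_one]
  unfold unitaryNbhd
  rw [Set.mem_ofPred_eq, Set.mem_ofPred_eq, h3, key _ _ h1 h2]

lemma arrMul_arrMul_conjTranspose (n : ℕ) {V : Fin n → Fin n → ℂ} (hV : V ∈ unitarySet n)
    (X : Fin n → Fin n → ℂ) :
    arrMul n (arrMul n X V) (fun i j => (Matrix.of V)ᴴ i j) = X := by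
  have h2 : Matrix.of V * (Matrix.of V)ᴴ = 1 := Matrix.mem_unitaryGroup_iff.mp hV
  change Matrix.of X * Matrix.of V * (Matrix.of V)ᴴ = Matrix.of X
  rw [Matrix.mul_assoc, h2, Matrix.mul_one]

lemma continuous_arrMul_right (n : ℕ) (V : Fin n → Fin n → ℂ) :
    Continuous fun X => arrMul n X V :=
  (continuous_arrMul n).comp (continuous_id.prodMk continuous_const)

/-- Right multiplication by `V` as a real linear map. -/
def arrMulRight (n : ℕ) (V : Fin n → Fin n → ℂ) :
    (Fin n → Fin n → ℂ) →ₗ[ℝ] (Fin n → Fin n → ℂ) where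
  toFun X := arrMul n X V
  map_add' X Y := by
    ext i j
    simp [arrMul, Matrix.mul_apply, add_mul, Finset.sum_add_distrib]
  map_smul' r X := by
    ext i j
    simp [arrMul, Matrix.mul_apply, mul_assoc, Finset.mul_sum]

/-- Right multiplication by a unitary matrix preserves Lebesgue measure. The scaling factor is
read off from the invariant set `{X : ‖X*X - I‖ < 1}`, of finite positive measure. -/
lemma measurePreserving_arrMul (n : ℕ) {V : Fin n → Fin n → ℂ} (hV : V ∈ unitarySet n) :
    MeasurePreserving (fun X => arrMul n X V) volume volume := by
  have hc := continuous_arrMul_right n V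
  refine ⟨hc.measurable, ?_⟩
  set L := arrMulRight n V
  have hinj : Function.Injective L :=
    Function.LeftInverse.injective
      (g := fun X => arrMul n X fun i j => (Matrix.of V)ᴴ i j) (arrMul_arrMul_conjTranspose n hV)
  have hdet : LinearMap.det L ≠ 0 := by
    rw [← isUnit_iff_ne_zero]
    exact LinearMap.isUnit_det L
      ((LinearMap.isUnit_iff_ker_eq_bot L).mpr (LinearMap.ker_eq_bot.mpr hinj))
  have := isAddHaarMeasure_volume n
  have hmap := Measure.map_linearMap_addHaar_eq_smul_addHaar
    (volume : Measure (Fin n → Fin n → ℂ)) hdet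
  change Measure.map (fun X => arrMul n X V) volume = _ at hmap
  have hA := congrArg (fun m => m (unitaryNbhd n 1)) hmap
  have hpre : (fun X => arrMul n X V) ⁻¹' unitaryNbhd n 1 = unitaryNbhd n 1 :=
    Set.ext (arrMul_mem_unitaryNbhd_iff n 1 hV)
  simp only [Measure.smul_apply, smul_eq_mul] at hA
  rw [Measure.map_apply hc.measurable (isOpen_unitaryNbhd n 1).measurableSet, hpre] at hA
  have hone : ENNReal.ofReal |(LinearMap.det L)⁻¹| = 1 :=
    ((ENNReal.mul_eq_right (volume_unitaryNbhd_pos n one_pos).ne'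
      (volume_unitaryNbhd_lt_top n le_rfl).ne).mp hA.symm)
  rw [hmap, hone, one_smul]

lemma setIntegral_arrMul (n : ℕ) (f : (Fin n → Fin n → ℂ) → ℂ) (hf : Continuous f) (ε : ℝ)
    {V : Fin n → Fin n → ℂ} (hV : V ∈ unitarySet n) :
    ∫ X in unitaryNbhd n ε, f (arrMul n X V) = ∫ X in unitaryNbhd n ε, f X := by
  have hmp := measurePreserving_arrMul n hV
  have hpre : (fun X => arrMul n X V) ⁻¹' unitaryNbhd n ε = unitaryNbhd n ε :=
    Set.ext (arrMul_mem_unitaryNbhd_iff n ε hV)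
  have hmp' := hmp.restrict_preimage (isOpen_unitaryNbhd n ε).measurableSet
  rw [hpre] at hmp'
  rw [← hmp'.map_eq, integral_map hmp'.measurable.aemeasurable
    hf.aestronglyMeasurable, hmp'.map_eq]

lemma IsHaarUnitary.restrict_eq {n : ℕ} {μ : Measure (Fin n → Fin n → ℂ)}
    (hμ : IsHaarUnitary n μ) : μ.restrict (unitarySet n) = μ := by
  have := hμ.1
  apply Measure.restrict_eq_self_of_ae_mem
  exact (mem_ae_iff_prob_eq_one (isCompact_unitarySet n).measurableSet).mpr hμ.2.1

/-- Averaging over right translates: `f` may be replaced by `X ↦ ∫ f(XV) dμ(V)`. -/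
lemma setIntegral_nbhd_eq {n : ℕ} {μ : Measure (Fin n → Fin n → ℂ)} (hμ : IsHaarUnitary n μ)
    (f : (Fin n → Fin n → ℂ) → ℂ) (hf : Continuous f) {ε : ℝ} (hε : ε ≤ 1) :
    ∫ X in unitaryNbhd n ε, f X
      = ∫ X in unitaryNbhd n ε, ∫ V, f (arrMul n X V) ∂μ := by
  have := hμ.1
  have hcont : Continuous fun p : (Fin n → Fin n → ℂ) × (Fin n → Fin n → ℂ) =>
      f (arrMul n p.1 p.2) := hf.comp (continuous_arrMul n)
  have hfin : IsFiniteMeasure (volume.restrict (unitaryNbhd n ε)) :=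
    ⟨by simpa using volume_unitaryNbhd_lt_top n hε⟩
  have hint : Integrable (Function.uncurry fun X V => f (arrMul n X V))
      ((volume.restrict (unitaryNbhd n ε)).prod μ) := by
    rw [← hμ.restrict_eq, Measure.prod_restrict]
    refine IntegrableOn.mono_set (t := Metric.closedBall 0 2 ×ˢ Metric.closedBall 0 2) ?_
      (Set.prod_mono (unitaryNbhd_subset_closedBall n hε) (unitarySet_subset_closedBall n))
    exact hcont.continuousOn.integrableOn_compact
      ((isCompact_closedBall _ _).prod (isCompact_closedBall _ _))
  rw [integral_integral_swap hint]
  have hae : ∀ᵐ V ∂μ, ∫ X in unitaryNbhd n ε, f (arrMul n X V)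
      = ∫ X in unitaryNbhd n ε, f X := by
    have hmem : ∀ᵐ V ∂μ, V ∈ unitarySet n :=
      (mem_ae_iff_prob_eq_one (isCompact_unitarySet n).measurableSet).mpr hμ.2.1
    filter_upwards [hmem] with V hV using setIntegral_arrMul n f hf ε hV
  rw [integral_congr_ae hae]
  simp

lemma continuous_average {n : ℕ} {μ : Measure (Fin n → Fin n → ℂ)} (hμ : IsHaarUnitary n μ)
    (f : (Fin n → Fin n → ℂ) → ℂ) (hf : Continuous f) :
    Continuous fun X => ∫ V, f (arrMul n X V) ∂μ := by
  have := hμ.1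
  have h := continuous_parametric_integral_of_continuous (μ := μ)
    (f := fun X V => f (arrMul n X V)) (hf.comp (continuous_arrMul n)) (isCompact_unitarySet n)
  simpa only [hμ.restrict_eq] using h

lemma average_eq_of_unitary {n : ℕ} {μ : Measure (Fin n → Fin n → ℂ)}
    (hμ : IsHaarUnitary n μ) (f : (Fin n → Fin n → ℂ) → ℂ) (hf : Continuous f)
    {W : Fin n → Fin n → ℂ} (hW : W ∈ unitarySet n) :
    ∫ V, f (arrMul n W V) ∂μ = ∫ V, f V ∂μ := by
  have hmap : Measure.map (fun V => arrMul n W V) μ = μ := hμ.2.2 (Matrix.of W) hW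
  have hc : Continuous fun V => arrMul n W V :=
    (continuous_arrMul n).comp (continuous_const.prodMk continuous_id)
  conv_rhs => rw [← hmap]
  rw [integral_map hc.measurable.aemeasurable hf.aestronglyMeasurable]

/-- A continuous function equal to `c` on unitary matrices is uniformly close to `c` on
`{X : ‖X*X - I‖ < ε}` for small `ε`: on the compact set of `X` in the ball of radius `2` where
it is at distance at least `δ` from `c`, the defect `‖X*X - I‖` has a positive minimum. -/
lemma exists_nbhd_close {n : ℕ} (F : (Fin n → Fin n → ℂ) → ℂ) (hF : Continuous F) (c : ℂ)
    (hFc : ∀ W ∈ unitarySet n, F W = c) {δ : ℝ} (hδ : 0 < δ) :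
    ∃ ε₀ : ℝ, 0 < ε₀ ∧ ε₀ ≤ 1 ∧ ∀ X ∈ unitaryNbhd n ε₀, ‖F X - c‖ ≤ δ := by
  set S : Set (Fin n → Fin n → ℂ) := Metric.closedBall 0 2 ∩ {X | δ ≤ ‖F X - c‖} with hS
  have hScomp : IsCompact S := (isCompact_closedBall _ _).inter_right
    (isClosed_le continuous_const (by fun_prop))
  rcases S.eq_empty_or_nonempty with hemp | hne
  · refine ⟨1, one_pos, le_rfl, fun X hX => ?_⟩
    by_contra! h
    have : X ∈ S := ⟨unitaryNbhd_subset_closedBall n le_rfl hX, h.le⟩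
    simp [hemp] at this
  · obtain ⟨Y, hY, hmin⟩ := hScomp.exists_isMinOn hne (continuous_frobNorm_defect n).continuousOn
    have hpos : 0 < frobNorm n ((Matrix.of Y)ᴴ * Matrix.of Y - 1) := by
      by_contra! h
      have h1 := hFc Y (mem_unitarySet_of_defect_le n h)
      have h2 : δ ≤ ‖F Y - c‖ := hY.2
      rw [h1] at h2
      simp at h2
      linarith
    refine ⟨min 1 (frobNorm n ((Matrix.of Y)ᴴ * Matrix.of Y - 1)), lt_min one_pos hpos,
      min_le_left _ _, fun X hX => ?_⟩
    by_contra! h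
    have hXS : X ∈ S := ⟨unitaryNbhd_subset_closedBall n (min_le_left _ _) hX, h.le⟩
    have h1 : frobNorm n ((Matrix.of Y)ᴴ * Matrix.of Y - 1)
        ≤ frobNorm n ((Matrix.of X)ᴴ * Matrix.of X - 1) := hmin hXS
    have h2 : frobNorm n ((Matrix.of X)ᴴ * Matrix.of X - 1) < _ := hX
    exact absurd (h2.trans_le (min_le_right _ _)) (not_lt.mpr h1)

/-- Haar integrals over `U(n)` of a continuous function are limits, as `ε → 0⁺`, of
normalized Lebesgue integrals over the neighbourhoods `{X : ‖X*X - I‖ < ε}` of the unitary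
group in matrix space; moreover these neighbourhoods have finite positive Lebesgue measure
for small `ε > 0`. -/
theorem haar_unitary_as_limit_of_lebesgue_neighbourhoods
    (n : ℕ) (f : (Fin n → Fin n → ℂ) → ℂ) (hf : Continuous f)
    (μ : Measure (Fin n → Fin n → ℂ)) (hμ : IsHaarUnitary n μ) :
    (∀ᶠ ε in nhdsWithin (0 : ℝ) (Set.Ioi 0),
      0 < volume {X : Fin n → Fin n → ℂ |
          frobNorm n ((Matrix.of X)ᴴ * Matrix.of X - 1) < ε} ∧
      volume {X : Fin n → Fin n → ℂ |
          frobNorm n ((Matrix.of X)ᴴ * Matrix.of X - 1) < ε} < ⊤) ∧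
    Tendsto (fun ε : ℝ =>
        (∫ X in {X : Fin n → Fin n → ℂ |
            frobNorm n ((Matrix.of X)ᴴ * Matrix.of X - 1) < ε}, f X) /
          ((volume {X : Fin n → Fin n → ℂ |
            frobNorm n ((Matrix.of X)ᴴ * Matrix.of X - 1) < ε}).toReal : ℂ))
      (nhdsWithin (0 : ℝ) (Set.Ioi 0))
      (nhds (∫ U, f U ∂μ)) := by
  constructor
  · filter_upwards [Ioc_mem_nhdsGT (zero_lt_one (α := ℝ))] with ε hε
    exact ⟨volume_unitaryNbhd_pos n hε.1, volume_unitaryNbhd_lt_top n hε.2⟩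
  change Tendsto (fun ε : ℝ => (∫ X in unitaryNbhd n ε, f X) /
    ((volume (unitaryNbhd n ε)).toReal : ℂ)) _ _
  have hF := continuous_average hμ f hf
  rw [Metric.tendsto_nhds]
  intro δ hδ
  obtain ⟨ε₀, hε₀, hε₀1, hclose⟩ := exists_nbhd_close _ hF (∫ U, f U ∂μ)
    (fun W hW => average_eq_of_unitary hμ f hf hW) (half_pos hδ)
  filter_upwards [Ioc_mem_nhdsGT hε₀] with ε hε
  have hε1 : ε ≤ 1 := hε.2.trans hε₀1
  have hlt := volume_unitaryNbhd_lt_top n hε1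
  have hv : 0 < (volume (unitaryNbhd n ε)).toReal :=
    ENNReal.toReal_pos (volume_unitaryNbhd_pos n hε.1).ne' hlt.ne
  rw [setIntegral_nbhd_eq hμ f hf hε1, dist_eq_norm]
  set F : (Fin n → Fin n → ℂ) → ℂ := fun X => ∫ V, f (arrMul n X V) ∂μ with hFdef
  set c : ℂ := ∫ U, f U ∂μ
  set v : ℝ := (volume (unitaryNbhd n ε)).toReal with hvdef
  have hFint : IntegrableOn F (unitaryNbhd n ε) :=
    (hF.continuousOn.integrableOn_compact (isCompact_closedBall 0 2)).mono_set
      (unitaryNbhd_subset_closedBall n hε1)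
  have hbound : ‖∫ X in unitaryNbhd n ε, (F X - c)‖ ≤ δ / 2 * v :=
    norm_setIntegral_le_of_norm_le_const hlt fun X hX =>
      hclose X (lt_of_lt_of_le (show _ < ε from hX) hε.2)
  rw [integral_sub hFint (integrableOn_const hlt.ne), setIntegral_const] at hbound
  have hvC : (v : ℂ) ≠ 0 := by exact_mod_cast hv.ne'
  have heq : (∫ X in unitaryNbhd n ε, F X) / (v : ℂ) - c
      = ((∫ X in unitaryNbhd n ε, F X) - volume.real (unitaryNbhd n ε) • c) / (v : ℂ) := by
    have : volume.real (unitaryNbhd n ε) = v := rfl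
    rw [this, Complex.real_smul]
    field_simp
  change ‖(∫ X in unitaryNbhd n ε, F X) / (v : ℂ) - c‖ < δ
  rw [heq, norm_div, Complex.norm_real, Real.norm_of_nonneg hv.le, div_lt_iff₀ hv]
  nlinarith

end
end

section
/- Fix n > m ≥ 1. Let 𝒩_{m,n} = {Y ∈ Mₙ(ℂ) : Y_{ij} = 0 for all 1 ≤ j < i ≤ m} (a complex linear subspace of complex dimension n² − m(m−1)/2, carrying Lebesgue measure) and let 𝒱_{m,n} = 𝒩_{m,n} ∩ U(n), a compact smooth submanifold of real dimension n² − m(m−1), carrying the normalized (n² − m(m−1))-dimensional Hausdorff (volume) probability measure H_𝒱. Then for every continuous function f : Mₙ(ℂ) → ℂ, ∫_{𝒱_{m,n}} f(V) dH_𝒱(V) = lim_{ε→0⁺} ( ∫_{{X ∈ 𝒩_{m,n} : ‖X*X − I‖ < ε}} f(X) dX ) / ( ∫_{{X ∈ 𝒩_{m,n} : ‖X*X − I‖ < ε}} dX ), where ‖·‖ is the Frobenius norm and dX denotes Lebesgue measure on 𝒩_{m,n}. -/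
/-!
Write `F Y = Y* Y - 1`, a map from the real Euclidean space `E = 𝒩_{m,n}` to the space `H` of
Hermitian matrices, so that `𝒱_{m,n} = F⁻¹(0)` and the neighbourhoods in the theorem are the tubes
`‖F‖ < ε`. The theorem splits into a general fact about tubes and a computation special to `F`.

**Tubes.** Let `F : E → H` have compact sublevel sets `‖F‖ ≤ R`, be strictly differentiable at its
zeros, and suppose that its normal Jacobian `det (L L*)`, with `L` the derivative, takes the same
nonzero value `c₀` at every zero. Then the tube averages of a continuous function converge to its
average over `F⁻¹(0)` for the Hausdorff measure of dimension `d = dim E - dim H`. Near a zero `p`,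
let `u : ℝᵈ → E` be an isometry onto `ker L`, and `Ψ = (u*, L) : E → ℝᵈ × H`. The chart
`x ↦ (u* (x - p), F x)` followed by `Ψ⁻¹` has derivative the identity at `p`, so it is
bi-Lipschitz with constants close to `1` near `p`, and hence changes both the volume of `E` and the
`d`-dimensional Hausdorff measure of the zero set by factors close to `1` (`exists_isFlatChart`).
In the image `ℝᵈ × H` the tube is a product and the limit is Fubini plus continuity
(`tendsto_model_tube`). The density of the image of Lebesgue measure under `Ψ` depends only on
`det (L L*)` (`exists_common_density`), so it is one constant for all charts. A partition of unity
along the compact zero set, followed by letting the distortion factor tend to `1`, gives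
`ε^(-dim H) ∫_{‖F‖ < ε} f → c ∫_{F⁻¹(0)} f dμH[d]` (`tendsto_tube`), and `c` cancels in averages
(`tendsto_average`).

**The normal Jacobian of `Y ↦ Y* Y - 1`.** At a zero `V` the derivative is `2 P A` restricted to
`𝒩_{m,n}`, where `A` is multiplication by `V*` on the left, an isometry of `Mₙ(ℂ)`, and `P` is the
projection to the Hermitian matrices. With `Q` the projection to `𝒩_{m,n}ᗮ`, `a = P A` on
`𝒩_{m,n}ᗮ` and `b = Q A⁻¹` on `H`, one gets `L L* = 4 (1 - a b)`, whose determinant is that of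
`4 (1 - b a)` up to a power of `4` (`det_comp_adjoint_eq`). Now `b a B = Q (B + V B* V) / 2`, and
`V B* V ∈ 𝒩_{m,n}` because of the triangular shape of the constraint
(`mul_conjTranspose_mul_mem`). Hence `b a = 1/2`, and the determinant does not depend on `V`
(`det_defectDeriv`).
-/

open MeasureTheory Filter Matrix

noncomputable section

noncomputable instance (ι : Type*) [Fintype ι] : MeasurableSpace (EuclideanSpace ℂ ι) :=
  borel _

instance (ι : Type*) [Fintype ι] : BorelSpace (EuclideanSpace ℂ ι) := ⟨rfl⟩

/-- Indices of the entries of a matrix in `𝒩_{m,n}` that are not constrained to vanish: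
the constraint is `Y i j = 0` for `j < i < m` (`0`-indexed). -/
abbrev FreeIdx (n m : ℕ) := {p : Fin n × Fin n // ¬((p.2 : ℕ) < (p.1 : ℕ) ∧ (p.1 : ℕ) < m)}

/-- The isometric embedding of coordinates on the free entries into matrix space
(Euclidean, i.e. Frobenius, geometry), filling the constrained entries with `0`. -/
def embed (n m : ℕ) (x : FreeIdx n m → ℂ) : Fin n × Fin n → ℂ := fun p =>
  if h : ¬((p.2 : ℕ) < (p.1 : ℕ) ∧ (p.1 : ℕ) < m) then x ⟨p, h⟩ else 0

/-- `𝒱_{m,n} = 𝒩_{m,n} ∩ U(n)` inside matrix space with the Frobenius (Euclidean) metric. -/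
def VSet (n m : ℕ) : Set (EuclideanSpace ℂ (Fin n × Fin n)) :=
  {X | (Matrix.of fun i j : Fin n => X (i, j)) ∈ Matrix.unitaryGroup (Fin n) ℂ ∧
    ∀ i j : Fin n, (j : ℕ) < (i : ℕ) → (i : ℕ) < m → X (i, j) = 0}

open Module Topology
open scoped ENNReal NNReal

set_option linter.unusedSectionVars false

/-! ### Linear straightening of a surjection -/

section Linear
variable {E H : Type*} [NormedAddCommGroup E] [InnerProductSpace ℝ E] [FiniteDimensional ℝ E]
  [NormedAddCommGroup H] [InnerProductSpace ℝ H] [FiniteDimensional ℝ H]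

/-- `Ψ = (u*, L)`, where `u` is an isometry of `ℝᵈ` into `ker L`: the linear change of coordinates
that splits `E` into the directions of `ker L` and the values of `L`. The product
`ℝᵈ × H` carries the sup norm, hence the adjoint of `u` is expressed through inner products. -/
structure IsStraightening {d : ℕ} (L : E →ₗ[ℝ] H) (u : EuclideanSpace ℝ (Fin d) →ₗᵢ[ℝ] E)
    (Ψ : E ≃ₗ[ℝ] EuclideanSpace ℝ (Fin d) × H) : Prop where
  snd : ∀ y, (Ψ y).2 = L y
  apply_u : ∀ t, Ψ (u t) = (t, 0)
  inner_fst : ∀ y t, inner ℝ t (Ψ y).1 = inner ℝ (u t) y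

theorem exists_isStraightening {d : ℕ} (L : E →ₗ[ℝ] H)
    (hd : finrank ℝ E = d + finrank ℝ H) (hL : LinearMap.det (L ∘ₗ L.adjoint) ≠ 0) :
    ∃ u : EuclideanSpace ℝ (Fin d) →ₗᵢ[ℝ] E, ∃ Ψ : E ≃ₗ[ℝ] EuclideanSpace ℝ (Fin d) × H,
      IsStraightening L u Ψ := by
  have hsurj : Function.Surjective L := by
    have : Function.Surjective (L ∘ₗ L.adjoint) :=
      (LinearMap.equivOfDetNeZero _ hL).surjective
    exact Function.Surjective.of_comp this
  have hker : finrank ℝ (LinearMap.ker L) = d := by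
    have h1 := LinearMap.finrank_range_add_finrank_ker L
    rw [LinearMap.range_eq_top.2 hsurj, finrank_top] at h1
    omega
  let b : OrthonormalBasis (Fin d) ℝ (LinearMap.ker L) :=
    (stdOrthonormalBasis ℝ (LinearMap.ker L)).reindex (finCongr hker)
  let u : EuclideanSpace ℝ (Fin d) →ₗᵢ[ℝ] E :=
    (LinearMap.ker L).subtypeₗᵢ.comp b.repr.symm.toLinearIsometry
  have hLu : ∀ t, L (u t) = 0 := fun t => (b.repr.symm t).2
  have hu : ∀ y, L y = 0 → ∃ t, u t = y := fun y hy =>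
    ⟨b.repr ⟨y, hy⟩, by simp [u]⟩
  let Φ : E →ₗ[ℝ] EuclideanSpace ℝ (Fin d) × H := (LinearMap.adjoint u.toLinearMap).prod L
  have hΦu : ∀ t, Φ (u t) = (t, 0) := by
    intro t
    refine Prod.ext ?_ (hLu t)
    refine ext_inner_left ℝ fun s => ?_
    change inner ℝ s (LinearMap.adjoint u.toLinearMap (u t)) = _
    rw [LinearMap.adjoint_inner_right]
    exact u.inner_map_map s t
  have hinj : Function.Injective Φ := by
    rw [injective_iff_map_eq_zero]
    intro y hy
    obtain ⟨t, rfl⟩ := hu y (congrArg Prod.snd hy)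
    rw [hΦu] at hy
    have : t = 0 := congrArg Prod.fst hy
    simp [this]
  let Ψ := LinearEquiv.ofInjectiveOfFinrankEq Φ hinj (by simp [hd])
  refine ⟨u, Ψ, fun y => rfl, hΦu, fun y t => ?_⟩
  exact LinearMap.adjoint_inner_right u.toLinearMap t y

/-- Two straightenings of surjections with the same `det (L L*)` differ by a volume preserving
map, because `Ψ Ψ* = id ⊕ L L*` for the Euclidean structure on `ℝᵈ × H`. -/
theorem IsStraightening.abs_det_eq_one {d : ℕ} {L L' : E →ₗ[ℝ] H}
    {u u' : EuclideanSpace ℝ (Fin d) →ₗᵢ[ℝ] E}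
    {Ψ Ψ' : E ≃ₗ[ℝ] EuclideanSpace ℝ (Fin d) × H}
    (h : IsStraightening L u Ψ) (h' : IsStraightening L' u' Ψ')
    (hL : LinearMap.det (L ∘ₗ L.adjoint) ≠ 0)
    (hLL : LinearMap.det (L ∘ₗ L.adjoint) = LinearMap.det (L' ∘ₗ L'.adjoint)) :
    |LinearMap.det (Ψ'.symm.toLinearMap ∘ₗ Ψ.toLinearMap)| = 1 := by
  set A : E →ₗ[ℝ] E := Ψ'.symm.toLinearMap ∘ₗ Ψ.toLinearMap with hA
  -- the adjoint of `Ψ` for the Euclidean product structure on the target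
  let adj (u : EuclideanSpace ℝ (Fin d) →ₗᵢ[ℝ] E) (L : E →ₗ[ℝ] H) :
      EuclideanSpace ℝ (Fin d) × H →ₗ[ℝ] E := u.toLinearMap.coprod L.adjoint
  have key : ∀ (L : E →ₗ[ℝ] H) (u : EuclideanSpace ℝ (Fin d) →ₗᵢ[ℝ] E)
      (Ψ : E ≃ₗ[ℝ] EuclideanSpace ℝ (Fin d) × H), IsStraightening L u Ψ →
      LinearMap.det (Ψ.toLinearMap ∘ₗ adj u L) = LinearMap.det (L ∘ₗ L.adjoint) := by
    intro L u Ψ h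
    have : Ψ.toLinearMap ∘ₗ adj u L = LinearMap.prodMap LinearMap.id (L ∘ₗ L.adjoint) := by
      refine LinearMap.ext fun ⟨t, x⟩ => ?_
      have e1 : (Ψ (L.adjoint x)).1 = 0 := by
        refine ext_inner_left ℝ fun s => ?_
        rw [h.inner_fst, LinearMap.adjoint_inner_right, ← h.snd, h.apply_u]
        simp
      have e2 : Ψ (L.adjoint x) = (0, L (L.adjoint x)) := Prod.ext e1 (h.snd _)
      simp [adj, h.apply_u, e2]
    rw [this, LinearMap.det_prodMap]
    simp
  have hadj : A.adjoint ∘ₗ adj u' L' = adj u L := by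
    refine LinearMap.ext fun ⟨t, x⟩ => ?_
    refine ext_inner_right ℝ fun y => ?_
    have e : Ψ' (A y) = Ψ y := by simp [hA]
    simp only [LinearMap.comp_apply, LinearMap.adjoint_inner_left, adj, LinearMap.coprod_apply,
      inner_add_left]
    have i1 : inner ℝ (u' t) (A y) = inner ℝ (u t) y := by
      rw [← h.inner_fst, ← h'.inner_fst, e]
    have i2 : inner ℝ x (L' (A y)) = inner ℝ x (L y) := by
      rw [← h.snd, ← h'.snd, e]
    simpa [i1] using i2
  have hΨ : Ψ.toLinearMap = Ψ'.toLinearMap ∘ₗ A := by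
    ext y <;> simp [hA]
  have hdet : LinearMap.det (A ∘ₗ A.adjoint) = 1 := by
    have k1 := key L u Ψ h
    have k2 := key L' u' Ψ' h'
    have c1 : Ψ.toLinearMap ∘ₗ adj u L
        = Ψ'.toLinearMap ∘ₗ ((A ∘ₗ A.adjoint) ∘ₗ (adj u' L' ∘ₗ Ψ'.toLinearMap)) ∘ₗ
          Ψ'.symm.toLinearMap := by
      rw [hΨ, ← hadj]
      refine LinearMap.ext fun x => ?_
      simp
    have c2 : Ψ'.toLinearMap ∘ₗ adj u' L'
        = Ψ'.toLinearMap ∘ₗ (adj u' L' ∘ₗ Ψ'.toLinearMap) ∘ₗ Ψ'.symm.toLinearMap := by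
      refine LinearMap.ext fun x => ?_
      simp
    rw [c1, LinearMap.det_conj, LinearMap.det_comp] at k1
    rw [c2, LinearMap.det_conj] at k2
    rw [k2, ← hLL] at k1
    exact mul_right_cancel₀ hL (by rw [k1, one_mul])
  have hsq := A.normDet_sq
  rw [LinearMap.det_comp, mul_comm, ← LinearMap.det_comp, hdet, A.normDet_eq_abs_det] at hsq
  have : |LinearMap.det A| ^ 2 = 1 := by simpa using hsq
  exact (pow_eq_one_iff_of_nonneg (abs_nonneg _) two_ne_zero).1 this

end Linear

/-! ### Flattening charts -/

section Charts
variable {E H : Type*} [NormedAddCommGroup E] [InnerProductSpace ℝ E] [FiniteDimensional ℝ E]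
  [MeasurableSpace E] [BorelSpace E]
  [NormedAddCommGroup H] [InnerProductSpace ℝ H] [FiniteDimensional ℝ H]
  [MeasurableSpace H] [BorelSpace H]

/-- The reference measure on the model space `ℝᵈ × H`. It is a product of Hausdorff measures, not
the Hausdorff measure of the product, whose metric is the sup metric. -/
def modelMeasure (d : ℕ) (H : Type*) [NormedAddCommGroup H] [InnerProductSpace ℝ H]
    [FiniteDimensional ℝ H] [MeasurableSpace H] [BorelSpace H] :
    Measure (EuclideanSpace ℝ (Fin d) × H) :=
  (μH[d] : Measure (EuclideanSpace ℝ (Fin d))).prod μH[finrank ℝ H]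

instance isAddHaar_hausdorff_euclidean (d : ℕ) :
    (μH[d] : Measure (EuclideanSpace ℝ (Fin d))).IsAddHaarMeasure := by
  simpa using MeasureTheory.isAddHaarMeasure_hausdorffMeasure (E := EuclideanSpace ℝ (Fin d))

instance (d : ℕ) : (modelMeasure d H).IsAddHaarMeasure := by
  unfold modelMeasure; infer_instance

/-- The density of the straightened volume of `E` depends on `L` only through `det (L L*)`. -/
theorem exists_common_density (d : ℕ) (c₀ : ℝ) (hc₀ : c₀ ≠ 0) :
    ∃ κ : ℝ≥0∞, κ ≠ 0 ∧ κ ≠ ∞ ∧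
      ∀ (L : E →ₗ[ℝ] H) (u : EuclideanSpace ℝ (Fin d) →ₗᵢ[ℝ] E)
        (Ψ : E ≃ₗ[ℝ] EuclideanSpace ℝ (Fin d) × H), IsStraightening L u Ψ →
        LinearMap.det (L ∘ₗ L.adjoint) = c₀ →
        (μH[finrank ℝ E] : Measure E).map Ψ = κ • modelMeasure d H := by
  by_cases hex : ∃ (L : E →ₗ[ℝ] H) (u : EuclideanSpace ℝ (Fin d) →ₗᵢ[ℝ] E)
        (Ψ : E ≃ₗ[ℝ] EuclideanSpace ℝ (Fin d) × H), IsStraightening L u Ψ ∧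
        LinearMap.det (L ∘ₗ L.adjoint) = c₀
  · obtain ⟨L', u', Ψ', h', hL'⟩ := hex
    have hcont : ∀ Ψ : E ≃ₗ[ℝ] EuclideanSpace ℝ (Fin d) × H, Continuous Ψ := fun Ψ =>
      Ψ.toContinuousLinearEquiv.continuous
    have : ((μH[finrank ℝ E] : Measure E).map Ψ').IsAddHaarMeasure :=
      Ψ'.toContinuousLinearEquiv.isAddHaarMeasure_map _
    refine ⟨((μH[finrank ℝ E] : Measure E).map Ψ').addHaarScalarFactor (modelMeasure d H), ?_,
      ENNReal.coe_ne_top, ?_⟩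
    · simpa using (Measure.addHaarScalarFactor_pos_of_isAddHaarMeasure
        ((μH[finrank ℝ E] : Measure E).map Ψ') (modelMeasure d H)).ne'
    · intro L u Ψ h hL
      have hdet := h.abs_det_eq_one h' (by rwa [hL]) (hL.trans hL'.symm)
      set A : E →ₗ[ℝ] E := Ψ'.symm.toLinearMap ∘ₗ Ψ.toLinearMap with hA
      have hA0 : LinearMap.det A ≠ 0 := by
        intro h0; rw [h0] at hdet; simp at hdet
      have hmapA := Measure.map_linearMap_addHaar_eq_smul_addHaar
        (μH[finrank ℝ E] : Measure E) hA0
      rw [abs_inv, hdet] at hmapA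
      simp only [inv_one, ENNReal.ofReal_one, one_smul] at hmapA
      have hfun : (Ψ : E → _) = Ψ' ∘ A := by
        ext y <;> simp [hA]
      rw [hfun, ← Measure.map_map (hcont Ψ').measurable
        (LinearMap.continuous_of_finiteDimensional A).measurable, hmapA]
      exact Measure.isAddLeftInvariant_eq_smul _ _
  · exact ⟨1, one_ne_zero, ENNReal.one_ne_top, fun L u Ψ h hL => (hex ⟨L, u, Ψ, h, hL⟩).elim⟩

/-- A map whose derivative at `p` is the identity is, near `p`, a homeomorphism onto an open set
which is Lipschitz in both directions with a constant as close to `1` as desired. -/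
theorem exists_bilipschitz_chart {G : E → E} {p : E} {K : ℝ≥0} (hK : 1 < K)
    (hG : HasStrictFDerivAt G (ContinuousLinearMap.id ℝ E) p) :
    ∃ e : OpenPartialHomeomorph E E, (e : E → E) = G ∧ p ∈ e.source ∧
      LipschitzOnWith K G e.source ∧ LipschitzOnWith K e.symm e.target := by
  have hK0 : 0 < K := zero_lt_one.trans hK
  set δ : ℝ≥0 := 1 - K⁻¹ with hδ
  have hKinv : K⁻¹ < 1 := inv_lt_one_of_one_lt₀ hK
  have hδ0 : 0 < δ := tsub_pos_of_lt hKinv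
  have hδr : (δ : ℝ) = 1 - (K : ℝ)⁻¹ := by
    rw [hδ, NNReal.coe_sub hKinv.le]; simp
  have : CompleteSpace E := FiniteDimensional.complete ℝ E
  obtain ⟨s, hs, hlin⟩ := hG.approximates_deriv_on_nhds (c := δ) (Or.inr hδ0)
  obtain ⟨U, hUs, hUo, hpU⟩ := mem_nhds_iff.1 hs
  have hlinU := hlin.mono_set hUs
  have hlin' : ApproximatesLinearOn G
      ((ContinuousLinearEquiv.refl ℝ E : E ≃L[ℝ] E) : E →L[ℝ] E) U δ := hlinU
  have hc : Subsingleton E ∨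
      δ < ‖((ContinuousLinearEquiv.refl ℝ E).symm : E →L[ℝ] E)‖₊⁻¹ := by
    rcases subsingleton_or_nontrivial E with h | h
    · exact Or.inl h
    · right
      have : ‖((ContinuousLinearEquiv.refl ℝ E).symm : E →L[ℝ] E)‖₊ = 1 := by
        change ‖ContinuousLinearMap.id ℝ E‖₊ = 1
        exact nnnorm_one
      rw [this, inv_one]
      exact tsub_lt_self zero_lt_one (inv_pos.2 hK0)
  have hKr : (1 : ℝ) < K := by exact_mod_cast hK
  have hest : ∀ x ∈ U, ∀ y ∈ U, ‖G x - G y‖ ≤ K * ‖x - y‖ ∧ ‖x - y‖ ≤ K * ‖G x - G y‖ := by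
    intro x hx y hy
    have h1 := hlinU x hx y hy
    rw [ContinuousLinearMap.id_apply, hδr] at h1
    have h2 : ‖G x - G y‖ ≤ ‖G x - G y - (x - y)‖ + ‖x - y‖ := by
      simpa using norm_add_le (G x - G y - (x - y)) (x - y)
    have h3 : ‖x - y‖ ≤ ‖G x - G y - (x - y)‖ + ‖G x - G y‖ := by
      have := norm_sub_le (G x - G y) (G x - G y - (x - y))
      rw [sub_sub_cancel] at this
      linarith
    have hxy := norm_nonneg (x - y)
    have hKi : (K : ℝ) * (K : ℝ)⁻¹ = 1 := mul_inv_cancel₀ (by positivity)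
    have hKi0 : 0 < (K : ℝ)⁻¹ := by positivity
    constructor
    · have : 2 - (K : ℝ)⁻¹ ≤ K := by nlinarith [sq_nonneg ((K : ℝ) - 1)]
      nlinarith
    · have : (K : ℝ)⁻¹ * ‖x - y‖ ≤ ‖G x - G y‖ := by linarith
      calc ‖x - y‖ = K * ((K : ℝ)⁻¹ * ‖x - y‖) := by rw [← mul_assoc, hKi, one_mul]
        _ ≤ _ := by gcongr
  refine ⟨hlin'.toOpenPartialHomeomorph G U hc hUo, rfl, hpU, ?_, ?_⟩
  · refine LipschitzOnWith.of_dist_le_mul fun x hx y hy => ?_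
    rw [dist_eq_norm, dist_eq_norm]
    exact (hest x hx y hy).1
  · set e := hlin'.toOpenPartialHomeomorph G U hc hUo
    refine LipschitzOnWith.of_dist_le_mul fun x hx y hy => ?_
    rw [dist_eq_norm, dist_eq_norm]
    have := (hest (e.symm x) (e.map_target hx) (e.symm y) (e.map_target hy)).2
    have ex : G (e.symm x) = x := e.right_inv hx
    have ey : G (e.symm y) = y := e.right_inv hy
    rwa [ex, ey] at this

/-- A chart `e` from an open subset of `E` to `ℝᵈ × H` with second component `F`, which compares
the volume of `E` with `κ` times the model measure, and the `d`-dimensional Hausdorff measure of the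
zero set of `F` with that of `ℝᵈ × {0}`, up to a factor `C`. The map underlying `e` is required to
be continuous on all of `E`, which makes it globally measurable. -/
structure IsFlatChart {d : ℕ} (F : E → H) (κ : ℝ≥0∞) (C : ℝ≥0)
    (e : OpenPartialHomeomorph E (EuclideanSpace ℝ (Fin d) × H)) : Prop where
  continuous : Continuous e
  snd : ∀ x, (e x).2 = F x
  measure_le : ∀ B, MeasurableSet B →
    μH[finrank ℝ E] (e.source ∩ e ⁻¹' B) ≤ C * (κ * modelMeasure d H B)
  le_measure : ∀ B, MeasurableSet B →
    κ * modelMeasure d H (B ∩ e.target) ≤ C * μH[finrank ℝ E] (e.source ∩ e ⁻¹' B)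
  slice_le : ∀ B : Set (EuclideanSpace ℝ (Fin d)),
    μH[d] (F ⁻¹' {0} ∩ e.source ∩ {x | (e x).1 ∈ B}) ≤ C * μH[d] B
  le_slice : ∀ B : Set (EuclideanSpace ℝ (Fin d)),
    μH[d] {t ∈ B | (t, (0 : H)) ∈ e.target} ≤
      C * μH[d] (F ⁻¹' {0} ∩ e.source ∩ {x | (e x).1 ∈ B})

/-- The chart is `x ↦ (first component of Ψ (x - p), F x)`. After composition with `Ψ⁻¹` its
derivative at `p` is the identity, and on the zero set of `F` that composition is `u` of the first
component, with `u` an isometry; so both Hausdorff measures are nearly preserved. -/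
theorem exists_isFlatChart {d : ℕ} {F : E → H} (hF : Continuous F) {κ : ℝ≥0∞} {C : ℝ≥0}
    (hC : 1 < C) {p : E} {L : E →L[ℝ] H} (hL : HasStrictFDerivAt F L p)
    {u : EuclideanSpace ℝ (Fin d) →ₗᵢ[ℝ] E} {Ψ : E ≃ₗ[ℝ] EuclideanSpace ℝ (Fin d) × H}
    (hΨ : IsStraightening (L : E →ₗ[ℝ] H) u Ψ)
    (hκ : (μH[finrank ℝ E] : Measure E).map Ψ = κ • modelMeasure d H) :
    ∃ e : OpenPartialHomeomorph E (EuclideanSpace ℝ (Fin d) × H),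
      p ∈ e.source ∧ IsFlatChart F κ C e := by
  -- a Lipschitz constant whose relevant powers stay below `C`
  obtain ⟨K, hK1, hKE, hKd⟩ : ∃ K : ℝ≥0, 1 < K ∧ K ^ (finrank ℝ E) ≤ C ∧ K ^ d ≤ C := by
    have h1 : ∀ j : ℕ, ∀ᶠ K : ℝ≥0 in 𝓝[>] 1, K ^ j ≤ C := by
      intro j
      have : Tendsto (fun K : ℝ≥0 => K ^ j) (𝓝[>] 1) (𝓝 1) := by
        have h := ((continuous_pow j).tendsto (1 : ℝ≥0)).mono_left
          (nhdsWithin_le_nhds (s := Set.Ioi 1))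
        simpa using h
      exact (this.eventually (gt_mem_nhds hC)).mono fun _ h => le_of_lt h
    have h2 : ∀ᶠ K : ℝ≥0 in 𝓝[>] 1, 1 < K := self_mem_nhdsWithin
    have : (𝓝[>] (1 : ℝ≥0)).NeBot := nhdsGT_neBot_of_exists_gt ⟨2, one_lt_two⟩
    exact (h2.and ((h1 _).and (h1 _))).exists
  let Ψc := Ψ.toContinuousLinearEquiv
  have hΨc : ∀ x, Ψc x = Ψ x := fun _ => rfl
  let g : E → EuclideanSpace ℝ (Fin d) × H := fun x => ((Ψc (x - p)).1, F x)
  have hg : Continuous g := by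
    have := Ψc.continuous
    fun_prop
  have hgd : HasStrictFDerivAt g (Ψc : E →L[ℝ] EuclideanSpace ℝ (Fin d) × H) p := by
    have h1 : HasStrictFDerivAt (fun x => (Ψc (x - p)).1)
        ((ContinuousLinearMap.fst ℝ _ _).comp
          (Ψc : E →L[ℝ] EuclideanSpace ℝ (Fin d) × H)) p := by
      have h0 : HasStrictFDerivAt (fun x : E => x - p) (ContinuousLinearMap.id ℝ E) p :=
        (hasStrictFDerivAt_id p).sub_const p
      exact ((ContinuousLinearMap.fst ℝ (EuclideanSpace ℝ (Fin d)) H).comp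
          (Ψc : E →L[ℝ] EuclideanSpace ℝ (Fin d) × H)).hasStrictFDerivAt.comp p h0
    have h2 := h1.prodMk hL
    convert! h2 using 1
    exact ContinuousLinearMap.ext fun y => Prod.ext rfl (hΨ.snd y)
  let G : E → E := fun x => Ψc.symm (g x)
  have hGd : HasStrictFDerivAt G (ContinuousLinearMap.id ℝ E) p := by
    have := Ψc.symm.hasStrictFDerivAt.comp p hgd
    convert! this using 1
    ext y
    simp
  obtain ⟨eG, heG, hp, hlip, hlip'⟩ := exists_bilipschitz_chart hK1 hGd
  let e := eG.trans Ψc.toHomeomorph.toOpenPartialHomeomorph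
  have he : ∀ x, e x = g x := by
    intro x
    change Ψc (eG x) = g x
    rw [heG]; simp [G]
  have hsrc : e.source = eG.source := by simp [e]
  have htgt : ∀ y, y ∈ e.target ↔ Ψ.symm y ∈ eG.target := by
    intro y
    simp only [e, OpenPartialHomeomorph.trans_target]
    simp
    rfl
  have hGu : ∀ x, F x = 0 → G x = u (g x).1 := by
    intro x hx
    apply Ψ.injective
    rw [hΨ.apply_u]
    change Ψc (Ψc.symm (g x)) = _
    rw [Ψc.apply_symm_apply]
    exact Prod.ext rfl hx
  have hpow : ∀ (j : ℕ), K ^ j ≤ C → ((K : ℝ≥0∞) ^ (j : ℝ)) ≤ C := by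
    intro j hj
    rw [ENNReal.rpow_natCast]
    exact_mod_cast hj
  have hup : ∀ (j : ℕ), K ^ j ≤ C → ∀ A ⊆ eG.source,
      μH[(j : ℝ)] (G '' A) ≤ C * μH[(j : ℝ)] A := by
    intro j hj A hA
    refine ((hlip.mono hA).hausdorffMeasure_image_le (Nat.cast_nonneg j)).trans ?_
    gcongr
    exact hpow j hj
  have hdown : ∀ (j : ℕ), K ^ j ≤ C → ∀ A ⊆ eG.source,
      μH[(j : ℝ)] A ≤ C * μH[(j : ℝ)] (G '' A) := by
    intro j hj A hA
    have hsub : G '' A ⊆ eG.target := by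
      rintro _ ⟨x, hx, rfl⟩
      rw [← heG]; exact eG.map_source (hA hx)
    have himg : eG.symm '' (G '' A) = A := by
      rw [← heG]
      exact eG.toPartialEquiv.symm_image_image_of_subset_source hA
    have := (hlip'.mono hsub).hausdorffMeasure_image_le (Nat.cast_nonneg (α := ℝ) j)
    rw [himg] at this
    refine this.trans ?_
    gcongr
    exact hpow j hj
  have hmap : ∀ B, MeasurableSet B →
      κ * modelMeasure d H B = μH[finrank ℝ E] (Ψ ⁻¹' B) := by
    intro B hB
    have hm : Measurable Ψ := Ψc.continuous.measurable
    rw [← Measure.map_apply hm hB, hκ]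
    simp
  refine ⟨e, by rwa [hsrc], ?_, ?_, ?_, ?_, ?_, ?_⟩
  · rwa [show (e : E → _) = g from funext he]
  · intro x; rw [he]
  · intro B hB
    rw [hmap B hB, hsrc]
    refine (hdown _ hKE _ Set.inter_subset_left).trans ?_
    gcongr
    rintro _ ⟨x, ⟨-, hx⟩, rfl⟩
    change Ψc (Ψc.symm (g x)) ∈ B
    rw [Ψc.apply_symm_apply, ← he]
    exact hx
  · intro B hB
    rw [hmap _ (hB.inter e.open_target.measurableSet), hsrc]
    refine le_trans (measure_mono ?_) (hup _ hKE _ Set.inter_subset_left)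
    rintro y ⟨hyB, hyt⟩
    rw [htgt, Ψ.symm_apply_apply] at hyt
    have hy : G (eG.symm y) = y := by rw [← heG]; exact eG.right_inv hyt
    refine ⟨eG.symm y, ⟨eG.map_target hyt, ?_⟩, hy⟩
    change e _ ∈ B
    rw [he, show g (eG.symm y) = Ψc (G (eG.symm y)) by simp [G], hy]
    exact hyB
  · intro B
    have hs : F ⁻¹' {0} ∩ e.source ∩ {x | (e x).1 ∈ B} ⊆ eG.source := by
      rintro x ⟨⟨-, hx⟩, -⟩; rwa [hsrc] at hx
    refine (hdown _ hKd _ hs).trans ?_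
    rw [← u.isometry.hausdorffMeasure_image (Or.inl (Nat.cast_nonneg d)) B]
    gcongr
    rintro _ ⟨x, ⟨⟨hx0, -⟩, hx⟩, rfl⟩
    rw [hGu x hx0]
    exact ⟨_, by rw [← he]; exact hx, rfl⟩
  · intro B
    have hs : F ⁻¹' {0} ∩ e.source ∩ {x | (e x).1 ∈ B} ⊆ eG.source := by
      rintro x ⟨⟨-, hx⟩, -⟩; rwa [hsrc] at hx
    rw [← u.isometry.hausdorffMeasure_image (Or.inl (Nat.cast_nonneg d))]
    refine le_trans (measure_mono ?_) (hup _ hKd _ hs)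
    rintro _ ⟨t, ⟨htB, ht⟩, rfl⟩
    set x := e.symm (t, (0 : H)) with hx
    have hxs : x ∈ e.source := e.map_target ht
    have hgx : g x = (t, 0) := by rw [← he]; exact e.right_inv ht
    have hF0 : F x = 0 := congrArg Prod.snd hgx
    refine ⟨x, ⟨⟨hF0, hxs⟩, ?_⟩, ?_⟩
    · change (e x).1 ∈ B
      rw [he, hgx]; exact htB
    · rw [hGu x hF0, hgx]

end Charts

/-! ### Tubes in the model space, and comparison up to a factor -/

section Tubes
variable {E H : Type*} [NormedAddCommGroup E] [InnerProductSpace ℝ E] [FiniteDimensional ℝ E]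
  [MeasurableSpace E] [BorelSpace E]
  [NormedAddCommGroup H] [InnerProductSpace ℝ H] [FiniteDimensional ℝ H]
  [MeasurableSpace H] [BorelSpace H]

/-- The integral of `φ` over the slice at height `h` is finite at `h = 0` and continuous there. -/
theorem tendsto_lintegral_slice {d : ℕ} {φ : EuclideanSpace ℝ (Fin d) × H → ℝ≥0}
    (hφ : Continuous φ) (hφc : HasCompactSupport φ) :
    (∫⁻ t, φ (t, 0) ∂(μH[d] : Measure (EuclideanSpace ℝ (Fin d)))) ≠ ∞ ∧
    Tendsto (fun h : H => ∫⁻ t, φ (t, h) ∂(μH[d] : Measure (EuclideanSpace ℝ (Fin d)))) (𝓝 0)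
      (𝓝 (∫⁻ t, φ (t, 0) ∂(μH[d] : Measure (EuclideanSpace ℝ (Fin d))))) := by
  obtain ⟨M, hM⟩ : ∃ M : ℝ≥0, ∀ z, φ z ≤ M := by
    obtain ⟨M, hM⟩ := (hφc.isCompact_range hφ).bddAbove
    exact ⟨M, fun z => hM ⟨z, rfl⟩⟩
  set K := Prod.fst '' tsupport φ with hK
  have hKc : IsCompact K := hφc.isCompact.image continuous_fst
  have hbound : ∀ (h : H) t, (φ (t, h) : ℝ≥0∞) ≤ K.indicator (fun _ => (M : ℝ≥0∞)) t := by
    intro h t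
    by_cases ht : t ∈ K
    · rw [Set.indicator_of_mem ht]; exact_mod_cast hM _
    · have : φ (t, h) = 0 := by
        by_contra h0
        exact ht ⟨(t, h), subset_tsupport _ h0, rfl⟩
      simp [this]
  have hfin : (∫⁻ t, K.indicator (fun _ => (M : ℝ≥0∞)) t
      ∂(μH[d] : Measure (EuclideanSpace ℝ (Fin d)))) ≠ ∞ := by
    rw [lintegral_indicator hKc.measurableSet, setLIntegral_const]
    exact ENNReal.mul_ne_top ENNReal.coe_ne_top hKc.measure_lt_top.ne
  refine ⟨ne_top_of_le_ne_top hfin (lintegral_mono (hbound 0)), ?_⟩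
  refine tendsto_lintegral_filter_of_dominated_convergence _ ?_ ?_ hfin ?_
  · exact Eventually.of_forall fun h => by fun_prop
  · exact Eventually.of_forall fun h => Eventually.of_forall (hbound h)
  · refine Eventually.of_forall fun t => ?_
    have : Continuous fun h : H => (φ (t, h) : ℝ≥0∞) := by fun_prop
    exact this.tendsto 0

/-- The limit of normalized tube integrals in the model space, where the tube is the product of
`ℝᵈ` with a ball. -/
theorem tendsto_model_tube {d : ℕ} {φ : EuclideanSpace ℝ (Fin d) × H → ℝ≥0}
    (hφ : Continuous φ) (hφc : HasCompactSupport φ) :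
    Tendsto (fun ε : ℝ => (ENNReal.ofReal (ε ^ finrank ℝ H))⁻¹ *
        ∫⁻ z in {z | ‖z.2‖ < ε}, φ z ∂modelMeasure d H) (𝓝[>] 0)
      (𝓝 (μH[finrank ℝ H] (Metric.ball (0 : H) 1) *
        ∫⁻ t, φ (t, 0) ∂(μH[d] : Measure (EuclideanSpace ℝ (Fin d))))) := by
  set ν : Measure H := μH[finrank ℝ H] with hν
  set Φ : H → ℝ≥0∞ := fun h => ∫⁻ t, φ (t, h) ∂(μH[d] : Measure (EuclideanSpace ℝ (Fin d)))
    with hΦ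
  obtain ⟨hfin, hlim⟩ := tendsto_lintegral_slice hφ hφc
  have hν1 : ν (Metric.ball 0 1) ≠ 0 := (Metric.measure_ball_pos ν 0 one_pos).ne'
  have hν1' : ν (Metric.ball 0 1) ≠ ∞ := measure_ball_lt_top.ne
  have hfub : ∀ ε : ℝ, ∫⁻ z in {z | ‖z.2‖ < ε}, φ z ∂modelMeasure d H
      = ∫⁻ h in Metric.ball 0 ε, Φ h ∂ν := by
    intro ε
    have hset : {z : EuclideanSpace ℝ (Fin d) × H | ‖z.2‖ < ε}
        = Set.univ ×ˢ Metric.ball (0 : H) ε := by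
      ext z; simp
    rw [hset, modelMeasure, ← Measure.prod_restrict, Measure.restrict_univ,
      lintegral_prod_symm _ (by fun_prop)]
  -- the averages of `Φ` over shrinking balls tend to `Φ 0`
  have havg : Tendsto (fun ε : ℝ => (ν (Metric.ball 0 ε))⁻¹ * ∫⁻ h in Metric.ball 0 ε, Φ h ∂ν)
      (𝓝[>] 0) (𝓝 (Φ 0)) := by
    rw [ENNReal.tendsto_nhds hfin]
    intro η hη
    have h1 := (ENNReal.tendsto_nhds hfin).1 hlim η hη
    obtain ⟨r, hr, hball⟩ := Metric.eventually_nhds_iff_ball.1 h1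
    filter_upwards [Ioo_mem_nhdsGT hr] with ε hε
    have hpos : ν (Metric.ball 0 ε) ≠ 0 := (Metric.measure_ball_pos ν 0 hε.1).ne'
    have htop : ν (Metric.ball 0 ε) ≠ ∞ := measure_ball_lt_top.ne
    have hsub : ∀ h ∈ Metric.ball (0 : H) ε, Φ h ∈ Set.Icc (Φ 0 - η) (Φ 0 + η) :=
      fun h hh => hball h (Metric.ball_subset_ball hε.2.le hh)
    have hconst : ∀ b : ℝ≥0∞,
        (ν (Metric.ball 0 ε))⁻¹ * ∫⁻ _ in Metric.ball (0 : H) ε, b ∂ν = b := by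
      intro b
      rw [setLIntegral_const, mul_comm b, ← mul_assoc, ENNReal.inv_mul_cancel hpos htop, one_mul]
    constructor
    · rw [← hconst (Φ 0 - η)]
      refine mul_le_mul' le_rfl ?_
      exact setLIntegral_mono' measurableSet_ball fun h hh => (hsub h hh).1
    · conv_rhs => rw [← hconst (Φ 0 + η)]
      refine mul_le_mul' le_rfl ?_
      exact setLIntegral_mono' measurableSet_ball fun h hh => (hsub h hh).2
  refine (ENNReal.Tendsto.const_mul havg (Or.inr hν1')).congr' ?_
  filter_upwards [self_mem_nhdsWithin] with ε hε
  have hε0 : (0 : ℝ) < ε := hε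
  rw [hfub, Measure.addHaar_ball_of_pos ν 0 hε0, ENNReal.mul_inv (Or.inr hν1') (Or.inr hν1),
    ← mul_assoc, mul_left_comm, ENNReal.mul_inv_cancel hν1 hν1', mul_one]

/-- `ε⁻ᵏ ∫ f` over the tube `‖F‖ < ε`, where `k` is the dimension of the target of `F`. -/
def tube (F : E → H) (f : E → ℝ≥0) (ε : ℝ) : ℝ≥0∞ :=
  (ENNReal.ofReal (ε ^ finrank ℝ H))⁻¹ * ∫⁻ x in {x | ‖F x‖ < ε}, f x ∂μH[finrank ℝ E]

/-- Up to a factor `C`, the family `T` agrees near `0⁺` with a convergent family `a`, and `J` agrees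
with the finite limit of `a`. No convergence of `T` itself is claimed. -/
def Sandwich (C : ℝ≥0) (T : ℝ → ℝ≥0∞) (J : ℝ≥0∞) : Prop :=
  ∃ (a : ℝ → ℝ≥0∞) (l : ℝ≥0∞), l ≠ ∞ ∧ Tendsto a (𝓝[>] 0) (𝓝 l) ∧
    (∀ᶠ ε in 𝓝[>] 0, T ε ≤ C * a ε ∧ a ε ≤ C * T ε) ∧ J ≤ C * l ∧ l ≤ C * J

theorem Sandwich.sum {ι : Type*} (s : Finset ι) {C : ℝ≥0} {T : ι → ℝ → ℝ≥0∞} {J : ι → ℝ≥0∞}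
    (h : ∀ i ∈ s, Sandwich C (T i) (J i)) :
    Sandwich C (fun ε => ∑ i ∈ s, T i ε) (∑ i ∈ s, J i) := by
  classical
  induction s using Finset.induction_on with
  | empty => exact ⟨fun _ => 0, 0, by simp, tendsto_const_nhds, by simp, by simp, by simp⟩
  | insert i s his ih =>
    obtain ⟨a, l, h1, h2, h3, h4, h5⟩ := h i (Finset.mem_insert_self i s)
    obtain ⟨a', l', h1', h2', h3', h4', h5'⟩ := ih fun j hj => h j (Finset.mem_insert_of_mem hj)
    refine ⟨fun ε => a ε + a' ε, l + l', ENNReal.add_ne_top.2 ⟨h1, h1'⟩, h2.add h2', ?_, ?_, ?_⟩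
    · filter_upwards [h3, h3'] with ε hε hε'
      rw [Finset.sum_insert his, mul_add, mul_add]
      exact ⟨add_le_add hε.1 hε'.1, add_le_add hε.2 hε'.2⟩
    · rw [Finset.sum_insert his, mul_add]; exact add_le_add h4 h4'
    · rw [Finset.sum_insert his, mul_add]; exact add_le_add h5 h5'

theorem Sandwich.congr {C : ℝ≥0} {T T' : ℝ → ℝ≥0∞} {J : ℝ≥0∞} (h : Sandwich C T J)
    (hT : T =ᶠ[𝓝[>] 0] T') : Sandwich C T' J := by
  obtain ⟨a, l, h1, h2, h3, h4⟩ := h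
  refine ⟨a, l, h1, h2, ?_, h4⟩
  filter_upwards [h3, hT] with ε hε hε'
  rwa [← hε']

theorem Sandwich.ne_top {C : ℝ≥0} {T : ℝ → ℝ≥0∞} {J : ℝ≥0∞} (h : Sandwich C T J) : J ≠ ∞ := by
  obtain ⟨a, l, h1, -, -, h4, -⟩ := h
  exact ne_top_of_le_ne_top (ENNReal.mul_ne_top ENNReal.coe_ne_top h1) h4

theorem tendsto_of_sandwich {T : ℝ → ℝ≥0∞} {J : ℝ≥0∞}
    (h : ∀ C : ℝ≥0, 1 < C → Sandwich C T J) : Tendsto T (𝓝[>] 0) (𝓝 J) := by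
  have hJ : J ≠ ∞ := (h 2 one_lt_two).ne_top
  have hC1 : Tendsto (fun C : ℝ≥0 => (C : ℝ≥0∞)) (𝓝[>] 1) (𝓝 1) := by
    have := (ENNReal.continuous_coe.tendsto 1).mono_left (nhdsWithin_le_nhds (s := Set.Ioi 1))
    simpa using this
  have : (𝓝[>] (1 : ℝ≥0)).NeBot := nhdsGT_neBot_of_exists_gt ⟨2, one_lt_two⟩
  have hmulJ : ∀ x : ℝ≥0∞, x ≠ ∞ →
      Tendsto (fun C : ℝ≥0 => (C : ℝ≥0∞) * (C * x)) (𝓝[>] 1) (𝓝 x) := by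
    intro x hx
    have h1 : Tendsto (fun C : ℝ≥0 => (C : ℝ≥0∞) * x) (𝓝[>] 1) (𝓝 (1 * x)) :=
      ENNReal.Tendsto.mul_const hC1 (Or.inr hx)
    have h2 := ENNReal.Tendsto.mul hC1 (Or.inl one_ne_zero) h1 (Or.inr ENNReal.one_ne_top)
    simpa using h2
  have hup : ∀ C : ℝ≥0, 1 < C → limsup T (𝓝[>] 0) ≤ C * (C * J) := by
    intro C hC
    obtain ⟨a, l, h1, h2, h3, h4, h5⟩ := h C hC
    calc limsup T (𝓝[>] 0) ≤ limsup (fun ε => C * a ε) (𝓝[>] 0) :=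
          limsup_le_limsup (h3.mono fun _ h => h.1)
      _ = C * l := (ENNReal.Tendsto.const_mul h2 (Or.inr ENNReal.coe_ne_top)).limsup_eq
      _ ≤ _ := by gcongr
  have hlow : ∀ C : ℝ≥0, 1 < C → J ≤ C * (C * liminf T (𝓝[>] 0)) := by
    intro C hC
    obtain ⟨a, l, h1, h2, h3, h4, h5⟩ := h C hC
    have hl : l ≤ C * liminf T (𝓝[>] 0) := by
      rw [← ENNReal.liminf_const_mul_of_ne_top ENNReal.coe_ne_top, ← h2.liminf_eq]
      exact liminf_le_liminf (h3.mono fun _ h => h.2)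
    exact h4.trans (by gcongr)
  have hsup : limsup T (𝓝[>] 0) ≤ J :=
    ge_of_tendsto (hmulJ J hJ) (by filter_upwards [self_mem_nhdsWithin] with C hC using hup C hC)
  have hle : liminf T (𝓝[>] 0) ≤ limsup T (𝓝[>] 0) := liminf_le_limsup
  have hinf : J ≤ liminf T (𝓝[>] 0) :=
    ge_of_tendsto (hmulJ _ (ne_top_of_le_ne_top hJ (hle.trans hsup)))
      (by filter_upwards [self_mem_nhdsWithin] with C hC using hlow C hC)
  exact tendsto_of_le_liminf_of_limsup_le hinf hsup

end Tubes

/-! ### From charts to the whole zero set -/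

section Global
variable {E H : Type*} [NormedAddCommGroup E] [InnerProductSpace ℝ E] [FiniteDimensional ℝ E]
  [MeasurableSpace E] [BorelSpace E]
  [NormedAddCommGroup H] [InnerProductSpace ℝ H] [FiniteDimensional ℝ H]
  [MeasurableSpace H] [BorelSpace H]

/-- A function supported in the source of a chart, read in the chart and extended by zero. -/
theorem exists_transport {X Y : Type*} [TopologicalSpace X] [TopologicalSpace Y] [T2Space Y]
    (e : OpenPartialHomeomorph X Y) {f : X → ℝ≥0} (hf : Continuous f)
    (hfc : HasCompactSupport f) (hfs : tsupport f ⊆ e.source) :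
    ∃ φ : Y → ℝ≥0, Continuous φ ∧ HasCompactSupport φ ∧ (∀ x ∈ e.source, φ (e x) = f x) ∧
      ∀ y ∉ e.target, φ y = 0 := by
  classical
  set K := e '' tsupport f with hK
  have hKc : IsCompact K := hfc.isCompact.image_of_continuousOn (e.continuousOn.mono hfs)
  let φ : Y → ℝ≥0 := fun y => if y ∈ e.target then f (e.symm y) else 0
  have hzero : ∀ y ∉ K, φ y = 0 := by
    intro y hy
    by_cases hyt : y ∈ e.target
    · simp only [φ, if_pos hyt]
      by_contra h0
      exact hy ⟨e.symm y, subset_tsupport _ h0, e.right_inv hyt⟩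
    · simp only [φ, if_neg hyt]
  refine ⟨φ, ?_, HasCompactSupport.intro hKc hzero, ?_, fun y hy => if_neg hy⟩
  · rw [continuous_iff_continuousAt]
    intro y
    by_cases hyt : y ∈ e.target
    · have h1 : ContinuousAt (fun y => f (e.symm y)) y :=
        hf.continuousAt.comp (e.continuousAt_symm hyt)
      refine h1.congr ?_
      filter_upwards [e.open_target.mem_nhds hyt] with z hz
      simp only [φ, if_pos hz]
    · have hyK : y ∉ K := by
        rintro ⟨x, hx, rfl⟩
        exact hyt (e.map_source (hfs hx))
      have : (fun _ => 0 : Y → ℝ≥0) =ᶠ[𝓝 y] φ := by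
        filter_upwards [hKc.isClosed.isOpen_compl.mem_nhds hyK] with z hz
        exact (hzero z hz).symm
      exact continuousAt_const.congr this
  · intro x hx
    simp only [φ, if_pos (e.map_source hx), e.left_inv hx]

/-- For `f` supported in a flat chart, the normalized tube integral and its expected limit are both
within the factor `C` of their counterparts for the transported function in the model space. -/
theorem IsFlatChart.sandwich {d : ℕ} {F : E → H} (hF : Continuous F) {κ : ℝ≥0∞} (hκ : κ ≠ ∞)
    {C : ℝ≥0}
    {e : OpenPartialHomeomorph E (EuclideanSpace ℝ (Fin d) × H)} (he : IsFlatChart F κ C e)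
    {f : E → ℝ≥0} (hf : Continuous f) (hfc : HasCompactSupport f) (hfs : tsupport f ⊆ e.source) :
    Sandwich C (tube F f) (κ * μH[finrank ℝ H] (Metric.ball (0 : H) 1) *
      ∫⁻ x in F ⁻¹' {0}, f x ∂μH[d]) := by
  obtain ⟨φ, hφ, hφc, hφe, hφ0⟩ := exists_transport e hf hfc hfs
  set U := e.source with hU
  have hUm : MeasurableSet U := e.open_source.measurableSet
  have hem : Measurable e := he.continuous.measurable
  set V := F ⁻¹' {0} with hV
  have hVm : MeasurableSet V := (isClosed_singleton.preimage hF).measurableSet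
  have hf0 : ∀ x ∉ U, f x = 0 := by
    intro x hx
    by_contra h0
    exact hx (hfs (subset_tsupport _ h0))
  have hν1' : μH[finrank ℝ H] (Metric.ball (0 : H) 1) ≠ ∞ := measure_ball_lt_top.ne
  set lam : Measure (EuclideanSpace ℝ (Fin d)) := μH[d] with hlam
  have hle : ((μH[finrank ℝ E] : Measure E).restrict U).map e ≤
      (C : ℝ≥0∞) • (κ • modelMeasure d H) := by
    refine Measure.le_iff.2 fun B hB => ?_
    rw [Measure.map_apply hem hB, Measure.restrict_apply (hem hB), Set.inter_comm,
      Measure.smul_apply, Measure.smul_apply]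
    exact he.measure_le B hB
  have hge : κ • (modelMeasure d H).restrict e.target ≤
      (C : ℝ≥0∞) • ((μH[finrank ℝ E] : Measure E).restrict U).map e := by
    refine Measure.le_iff.2 fun B hB => ?_
    rw [Measure.smul_apply, Measure.smul_apply, Measure.map_apply hem hB,
      Measure.restrict_apply (hem hB), Set.inter_comm, Measure.restrict_apply hB]
    exact he.le_measure B hB
  have hem1 : Measurable fun x => (e x).1 := measurable_fst.comp hem
  have hsle : ((μH[d] : Measure E).restrict (V ∩ U)).map (fun x => (e x).1) ≤
      (C : ℝ≥0∞) • lam := by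
    refine Measure.le_iff.2 fun B hB => ?_
    rw [Measure.map_apply hem1 hB, Measure.restrict_apply (hem1 hB), Set.inter_comm]
    exact he.slice_le B
  set S : Set (EuclideanSpace ℝ (Fin d)) := {t | (t, (0 : H)) ∈ e.target} with hS
  have hSm : MeasurableSet S := by
    have : IsOpen S := e.open_target.preimage (by fun_prop : Continuous fun t => (t, (0 : H)))
    exact this.measurableSet
  have hsge : lam.restrict S ≤
      (C : ℝ≥0∞) • ((μH[d] : Measure E).restrict (V ∩ U)).map (fun x => (e x).1) := by
    refine Measure.le_iff.2 fun B hB => ?_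
    rw [Measure.smul_apply, Measure.map_apply hem1 hB,
      Measure.restrict_apply (hem1 hB), Set.inter_comm, Measure.restrict_apply hB]
    exact he.le_slice B
  -- integrals over `E` and over the zero set, expressed in the chart
  have htube : ∀ ε : ℝ, ∫⁻ x in {x | ‖F x‖ < ε}, f x ∂μH[finrank ℝ E] =
      ∫⁻ z, {z : EuclideanSpace ℝ (Fin d) × H | ‖z.2‖ < ε}.indicator (fun z => (φ z : ℝ≥0∞)) z
        ∂((μH[finrank ℝ E] : Measure E).restrict U).map e := by
    intro ε
    have hm : MeasurableSet {z : EuclideanSpace ℝ (Fin d) × H | ‖z.2‖ < ε} :=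
      (isOpen_lt (by fun_prop) continuous_const).measurableSet
    have hm' : MeasurableSet {x | ‖F x‖ < ε} :=
      (isOpen_lt (by fun_prop) continuous_const).measurableSet
    rw [lintegral_map ((by fun_prop : Measurable fun z => (φ z : ℝ≥0∞)).indicator hm) hem,
      ← lintegral_indicator hm', ← lintegral_indicator hUm]
    refine lintegral_congr fun x => ?_
    by_cases hx : x ∈ U
    · rw [Set.indicator_of_mem hx]
      by_cases hxe : ‖F x‖ < ε
      · rw [Set.indicator_of_mem (show x ∈ {x | ‖F x‖ < ε} from hxe), Set.indicator_of_mem, hφe x hx]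
        change ‖(e x).2‖ < ε
        rwa [he.snd]
      · rw [Set.indicator_of_notMem (show x ∉ {x | ‖F x‖ < ε} from hxe),
          Set.indicator_of_notMem]
        change ¬ ‖(e x).2‖ < ε
        rwa [he.snd]
    · rw [Set.indicator_of_notMem hx]
      simp [Set.indicator, hf0 x hx]
  have hslice : ∫⁻ x in V, f x ∂μH[d] =
      ∫⁻ t, φ (t, 0) ∂((μH[d] : Measure E).restrict (V ∩ U)).map (fun x => (e x).1) := by
    rw [lintegral_map (by fun_prop) hem1, ← lintegral_indicator hVm,
      ← lintegral_indicator (hVm.inter hUm)]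
    refine lintegral_congr fun x => ?_
    by_cases hx : x ∈ U
    · by_cases hxV : x ∈ V
      · have hxVU : x ∈ V ∩ U := ⟨hxV, hx⟩
        rw [Set.indicator_of_mem hxV, Set.indicator_of_mem hxVU, ← hφe x hx]
        have : e x = ((e x).1, 0) := Prod.ext rfl (by rw [he.snd]; exact hxV)
        rw [← this]
      · simp [Set.indicator, hxV]
    · simp [Set.indicator, hx, hf0 x hx]
  obtain ⟨hfin, -⟩ := tendsto_lintegral_slice (d := d) (H := H) hφ hφc
  have hlim := tendsto_model_tube (d := d) (H := H) hφ hφc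
  refine ⟨fun ε => κ * ((ENNReal.ofReal (ε ^ finrank ℝ H))⁻¹ *
        ∫⁻ z in {z | ‖z.2‖ < ε}, φ z ∂modelMeasure d H), _, ?_,
      ENNReal.Tendsto.const_mul hlim (Or.inr hκ), Eventually.of_forall fun ε => ⟨?_, ?_⟩, ?_, ?_⟩
  · exact ENNReal.mul_ne_top hκ (ENNReal.mul_ne_top hν1' hfin)
  · have hm : MeasurableSet {z : EuclideanSpace ℝ (Fin d) × H | ‖z.2‖ < ε} :=
      (isOpen_lt (by fun_prop) continuous_const).measurableSet
    have h1 := lintegral_mono' hle (le_refl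
      ({z : EuclideanSpace ℝ (Fin d) × H | ‖z.2‖ < ε}.indicator (fun z => (φ z : ℝ≥0∞))))
    rw [← htube, lintegral_smul_measure, lintegral_smul_measure, lintegral_indicator hm] at h1
    calc tube F f ε ≤ (ENNReal.ofReal (ε ^ finrank ℝ H))⁻¹ *
          ((C : ℝ≥0∞) • κ • ∫⁻ z in {z | ‖z.2‖ < ε}, φ z ∂modelMeasure d H) := by
          unfold tube; gcongr
      _ = _ := by simp only [smul_eq_mul]; ring
  · have hm : MeasurableSet {z : EuclideanSpace ℝ (Fin d) × H | ‖z.2‖ < ε} :=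
      (isOpen_lt (by fun_prop) continuous_const).measurableSet
    have h1 := lintegral_mono' hge (le_refl
      ({z : EuclideanSpace ℝ (Fin d) × H | ‖z.2‖ < ε}.indicator (fun z => (φ z : ℝ≥0∞))))
    have h2 : ∫⁻ z in e.target, {z : EuclideanSpace ℝ (Fin d) × H | ‖z.2‖ < ε}.indicator
        (fun z => (φ z : ℝ≥0∞)) z ∂modelMeasure d H
        = ∫⁻ z in {z | ‖z.2‖ < ε}, φ z ∂modelMeasure d H := by
      rw [← lintegral_indicator hm, ← lintegral_indicator e.open_target.measurableSet]
      refine lintegral_congr fun z => ?_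
      by_cases hz : z ∈ e.target
      · rw [Set.indicator_of_mem hz]
      · simp [Set.indicator, hz, hφ0 z hz]
    rw [lintegral_smul_measure, lintegral_smul_measure, ← htube, h2] at h1
    calc κ * ((ENNReal.ofReal (ε ^ finrank ℝ H))⁻¹ *
          ∫⁻ z in {z | ‖z.2‖ < ε}, φ z ∂modelMeasure d H)
        = (ENNReal.ofReal (ε ^ finrank ℝ H))⁻¹ *
          (κ • ∫⁻ z in {z | ‖z.2‖ < ε}, φ z ∂modelMeasure d H) := by
            simp only [smul_eq_mul]; ring
      _ ≤ (ENNReal.ofReal (ε ^ finrank ℝ H))⁻¹ *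
          ((C : ℝ≥0∞) • ∫⁻ x in {x | ‖F x‖ < ε}, f x ∂μH[finrank ℝ E]) := by gcongr
      _ = C * tube F f ε := by unfold tube; simp only [smul_eq_mul]; ring
  · have h1 := lintegral_mono' hsle (le_refl fun t => (φ (t, 0) : ℝ≥0∞))
    rw [← hslice, lintegral_smul_measure] at h1
    calc κ * μH[finrank ℝ H] (Metric.ball (0 : H) 1) * ∫⁻ x in V, f x ∂μH[d]
        ≤ κ * μH[finrank ℝ H] (Metric.ball (0 : H) 1) * ((C : ℝ≥0∞) • ∫⁻ t, φ (t, 0) ∂lam) := by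
          gcongr
      _ = _ := by simp only [smul_eq_mul]; ring
  · have h1 := lintegral_mono' hsge (le_refl fun t => (φ (t, 0) : ℝ≥0∞))
    have h2 : ∫⁻ t in S, φ (t, 0) ∂lam = ∫⁻ t, φ (t, 0) ∂lam := by
      rw [← lintegral_indicator hSm]
      refine lintegral_congr fun t => ?_
      by_cases ht : t ∈ S
      · rw [Set.indicator_of_mem ht]
      · rw [Set.indicator_of_notMem ht, hφ0 _ ht]; simp
    rw [lintegral_smul_measure, ← hslice, h2] at h1
    calc κ * (μH[finrank ℝ H] (Metric.ball (0 : H) 1) * ∫⁻ t, φ (t, 0) ∂lam)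
        ≤ κ * (μH[finrank ℝ H] (Metric.ball (0 : H) 1) *
          ((C : ℝ≥0∞) • ∫⁻ x in V, f x ∂μH[d])) := by gcongr
      _ = _ := by simp only [smul_eq_mul]; ring

theorem IsFlatChart.hausdorffMeasure_pos {d : ℕ} {F : E → H} {κ : ℝ≥0∞} {C : ℝ≥0}
    {e : OpenPartialHomeomorph E (EuclideanSpace ℝ (Fin d) × H)} (he : IsFlatChart F κ C e)
    {p : E} (hp : p ∈ e.source) (hFp : F p = 0) : μH[d] (F ⁻¹' {0}) ≠ 0 := by
  intro h0
  have hopen : IsOpen {t : EuclideanSpace ℝ (Fin d) | (t, (0 : H)) ∈ e.target} :=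
    e.open_target.preimage (by fun_prop)
  have hne : ({t : EuclideanSpace ℝ (Fin d) | (t, (0 : H)) ∈ e.target}).Nonempty := by
    refine ⟨(e p).1, ?_⟩
    have : e p = ((e p).1, 0) := Prod.ext rfl (by rw [he.snd]; exact hFp)
    change ((e p).1, (0 : H)) ∈ e.target
    rw [← this]
    exact e.map_source hp
  have h1 := he.le_slice Set.univ
  have h2 : μH[d] (F ⁻¹' {0} ∩ e.source ∩ {x | (e x).1 ∈ Set.univ}) = 0 :=
    measure_mono_null (fun x hx => hx.1.1) h0
  rw [h2, mul_zero] at h1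
  refine (hopen.measure_pos (μH[d]) hne).ne' (le_antisymm ?_ zero_le)
  simpa using h1

/-- If the normal Jacobian `det (L L*)` of `F` has the same nonzero value at all points of the
compact zero set, then normalized tube integrals converge to a fixed multiple of the integral for
the Hausdorff measure of the zero set. -/
theorem tendsto_tube {d : ℕ} (hd : finrank ℝ E = d + finrank ℝ H) {F : E → H}
    (hF : Continuous F) (hproper : ∀ R : ℝ, IsCompact {x | ‖F x‖ ≤ R})
    (hne : (F ⁻¹' {0}).Nonempty) (L : E → E →L[ℝ] H)
    (hL : ∀ p, F p = 0 → HasStrictFDerivAt F (L p) p) {c₀ : ℝ} (hc₀ : c₀ ≠ 0)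
    (hdet : ∀ p, F p = 0 →
      LinearMap.det ((L p : E →ₗ[ℝ] H) ∘ₗ LinearMap.adjoint (L p : E →ₗ[ℝ] H)) = c₀) :
    μH[d] (F ⁻¹' {0}) ≠ 0 ∧ μH[d] (F ⁻¹' {0}) ≠ ∞ ∧
    ∃ c : ℝ≥0∞, c ≠ 0 ∧ c ≠ ∞ ∧ ∀ f : E → ℝ≥0, Continuous f →
      Tendsto (tube F f) (𝓝[>] 0) (𝓝 (c * ∫⁻ x in F ⁻¹' {0}, f x ∂μH[d])) := by
  obtain ⟨κ, hκ0, hκ1, hκ⟩ := exists_common_density (E := E) (H := H) d c₀ hc₀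
  have hchart : ∀ C : ℝ≥0, 1 < C → ∀ p, F p = 0 →
      ∃ e : OpenPartialHomeomorph E (EuclideanSpace ℝ (Fin d) × H),
        p ∈ e.source ∧ IsFlatChart F κ C e := by
    intro C hC p hp
    obtain ⟨u, Ψ, hΨ⟩ := exists_isStraightening (L p : E →ₗ[ℝ] H) hd (by rwa [hdet p hp])
    exact exists_isFlatChart hF hC (hL p hp) hΨ (hκ _ _ _ hΨ (hdet p hp))
  obtain ⟨p, hp⟩ := hne
  have : Nonempty (OpenPartialHomeomorph E (EuclideanSpace ℝ (Fin d) × H)) :=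
    ⟨(hchart 2 one_lt_two p hp).choose⟩
  have hν1' : μH[finrank ℝ H] (Metric.ball (0 : H) 1) ≠ ∞ := measure_ball_lt_top.ne
  have hν1 : μH[finrank ℝ H] (Metric.ball (0 : H) 1) ≠ 0 :=
    (Metric.measure_ball_pos _ _ one_pos).ne'
  have hsand : ∀ f : E → ℝ≥0, Continuous f → ∀ C : ℝ≥0, 1 < C →
      Sandwich C (tube F f) (κ * μH[finrank ℝ H] (Metric.ball (0 : H) 1) *
        ∫⁻ x in F ⁻¹' {0}, f x ∂μH[d]) := by
    intro f hf C hC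
    choose! e hpe he using hchart C hC
    have hVc : IsCompact (F ⁻¹' {0}) := by
      have : F ⁻¹' {0} = {x | ‖F x‖ ≤ 0} := by ext x; simp
      rw [this]; exact hproper 0
    obtain ⟨s, hsV, hs⟩ := hVc.elim_nhds_subcover (fun p => (e p).source)
      fun p hp => (e p).open_source.mem_nhds (hpe p hp)
    set W : Set E := ⋃ p ∈ s, (e p).source with hW
    have hWo : IsOpen W := isOpen_biUnion fun p _ => (e p).open_source
    -- by compactness, thin tubes are contained in the union of the charts
    obtain ⟨r, hr, hrW⟩ : ∃ r : ℝ, 0 < r ∧ {x | ‖F x‖ ≤ r} ⊆ W := by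
      by_cases hemp : ({x | ‖F x‖ ≤ 1} \ W).Nonempty
      · obtain ⟨x₀, hx₀, hmin⟩ := ((hproper 1).diff hWo).exists_isMinOn hemp
          (hF.norm.continuousOn)
        have hpos : 0 < ‖F x₀‖ := by
          rw [norm_pos_iff]
          intro h0
          exact hx₀.2 (hs h0)
        refine ⟨‖F x₀‖ / 2, half_pos hpos, fun x hx => ?_⟩
        by_contra hxW
        have hx' : ‖F x‖ ≤ ‖F x₀‖ / 2 := hx
        have hx1 : ‖F x‖ ≤ 1 := by
          have : ‖F x₀‖ ≤ 1 := hx₀.1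
          linarith
        have : ‖F x₀‖ ≤ ‖F x‖ := hmin (⟨hx1, hxW⟩ : x ∈ {x | ‖F x‖ ≤ 1} \ W)
        linarith
      · refine ⟨1, one_pos, fun x hx => ?_⟩
        by_contra hxW
        exact hemp ⟨x, hx, hxW⟩
    -- a partition of unity on a compact tube
    let idx : Fin s.card ≃ s := s.equivFin.symm
    obtain ⟨χ, hχs, hχ1, hχI, hχc⟩ := exists_continuous_sum_one_of_isOpen_isCompact
      (s := fun i : Fin s.card => (e (idx i)).source) (t := {x | ‖F x‖ ≤ r})
      (fun i => (e (idx i)).open_source) (hproper r) (by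
        intro x hx
        obtain ⟨p, hp, hxp⟩ := Set.mem_iUnion₂.1 (hrW hx)
        refine Set.mem_iUnion.2 ⟨idx.symm ⟨p, hp⟩, ?_⟩
        simpa using hxp)
    let g : Fin s.card → E → ℝ≥0 := fun i x => (χ i x).toNNReal * f x
    have hgc : ∀ i, Continuous (g i) := fun i => by
      have := (χ i).continuous
      fun_prop
    have hsupp : ∀ i, Function.support (g i) ⊆ Function.support (χ i) := by
      intro i x hx hx0
      apply hx
      simp only [g]
      rw [hx0]; simp
    have hgs : ∀ i, tsupport (g i) ⊆ (e (idx i)).source := fun i =>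
      (closure_mono (hsupp i)).trans (hχs i)
    have hgcs : ∀ i, HasCompactSupport (g i) := fun i => (hχc i).mono (hsupp i)
    have hsum : ∀ x, ‖F x‖ ≤ r → (f x : ℝ≥0∞) = ∑ i, (g i x : ℝ≥0∞) := by
      intro x hx
      have h1 : ∑ i, χ i x = 1 := by simpa using hχ1 hx
      have h2 : ∑ i, (χ i x).toNNReal = 1 := by
        rw [← Real.toNNReal_sum_of_nonneg fun i _ => (hχI i x).1, h1, Real.toNNReal_one]
      rw [← ENNReal.ofNNReal_finsetSum]
      simp only [g, ← Finset.sum_mul, h2, one_mul]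
    have hmain := Sandwich.sum Finset.univ (C := C) (T := fun i => tube F (g i))
      (J := fun i => κ * μH[finrank ℝ H] (Metric.ball (0 : H) 1) *
        ∫⁻ x in F ⁻¹' {0}, g i x ∂μH[d])
      fun i _ => (he (idx i) (hsV _ (idx i).2)).sandwich hF hκ1 (hgc i) (hgcs i) (hgs i)
    rw [← Finset.mul_sum, ← lintegral_finsetSum _ fun i _ => by
      have := hgc i; fun_prop] at hmain
    have hJ : ∫⁻ x in F ⁻¹' {0}, ∑ i, (g i x : ℝ≥0∞) ∂μH[d] =
        ∫⁻ x in F ⁻¹' {0}, f x ∂μH[d] := by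
      refine setLIntegral_congr_fun (isClosed_singleton.preimage hF).measurableSet fun x hx => ?_
      have hx0 : F x = 0 := hx
      exact (hsum x (by rw [hx0, norm_zero]; exact hr.le)).symm
    rw [hJ] at hmain
    refine hmain.congr ?_
    filter_upwards [Ioo_mem_nhdsGT hr] with ε hε
    unfold tube
    rw [← Finset.mul_sum, ← lintegral_finsetSum _ fun i _ => by
      have := hgc i; fun_prop]
    congr 1
    refine setLIntegral_congr_fun (isOpen_lt (by fun_prop) continuous_const).measurableSet
      fun x hx => ?_
    exact (hsum x ((le_of_lt hx).trans hε.2.le)).symm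
  have hc0 : κ * μH[finrank ℝ H] (Metric.ball (0 : H) 1) ≠ 0 := mul_ne_zero hκ0 hν1
  refine ⟨?_, ?_, _, hc0, ENNReal.mul_ne_top hκ1 hν1', fun f hf =>
    tendsto_of_sandwich (hsand f hf)⟩
  · obtain ⟨e, hpe, he⟩ := hchart 2 one_lt_two p hp
    exact he.hausdorffMeasure_pos hpe hp
  · have h1 := (hsand (fun _ => 1) continuous_const 2 one_lt_two).ne_top
    simp only [ENNReal.coe_one, lintegral_const, one_mul, Measure.restrict_apply,
      MeasurableSet.univ, Set.univ_inter] at h1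
    exact fun htop => h1 (by rw [htop]; exact ENNReal.mul_top hc0)

end Global

/-! ### Averages over tubes -/

section Ratio
variable {E H : Type*} [NormedAddCommGroup E] [InnerProductSpace ℝ E] [FiniteDimensional ℝ E]
  [MeasurableSpace E] [BorelSpace E]
  [NormedAddCommGroup H] [InnerProductSpace ℝ H] [FiniteDimensional ℝ H]
  [MeasurableSpace H] [BorelSpace H]

/-- Averages over tubes do not depend on the normalization of the Haar measure, nor on the factor
`ε ^ finrank ℝ H` in `tube`. -/
theorem lintegral_div_eq_tube_div (μ : Measure E) [μ.IsAddHaarMeasure] (F : E → H)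
    (f : E → ℝ≥0) {ε : ℝ} (hε : 0 < ε) :
    (∫⁻ x in {x | ‖F x‖ < ε}, f x ∂μ) / μ {x | ‖F x‖ < ε} =
      tube F f ε / tube F (fun _ => 1) ε := by
  have hμ := Measure.isAddLeftInvariant_eq_smul μ (μH[finrank ℝ E] : Measure E)
  set s := μ.addHaarScalarFactor (μH[finrank ℝ E] : Measure E) with hs
  have hs0 : s ≠ 0 := (Measure.addHaarScalarFactor_pos_of_isAddHaarMeasure _ _).ne'
  have hε0 : ENNReal.ofReal (ε ^ finrank ℝ H) ≠ 0 := by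
    simpa using pow_pos hε _
  rw [hμ]
  unfold tube
  simp only [ENNReal.coe_one, lintegral_const, one_mul, Measure.restrict_apply,
      MeasurableSet.univ, Set.univ_inter]
  rw [ENNReal.mul_div_mul_left _ _ (ENNReal.inv_ne_zero.2 ENNReal.ofReal_ne_top)
    (ENNReal.inv_ne_top.2 hε0)]
  rw [Measure.restrict_smul, lintegral_smul_measure, Measure.smul_apply, ENNReal.smul_def,
    ENNReal.smul_def, smul_eq_mul, smul_eq_mul, ENNReal.mul_div_mul_left _ _ (by simpa) (by simp)]

theorem tendsto_average_real {d : ℕ} (hd : finrank ℝ E = d + finrank ℝ H) {F : E → H}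
    (hF : Continuous F) (hproper : ∀ R : ℝ, IsCompact {x | ‖F x‖ ≤ R})
    (hne : (F ⁻¹' {0}).Nonempty) (L : E → E →L[ℝ] H)
    (hL : ∀ p, F p = 0 → HasStrictFDerivAt F (L p) p) {c₀ : ℝ} (hc₀ : c₀ ≠ 0)
    (hdet : ∀ p, F p = 0 →
      LinearMap.det ((L p : E →ₗ[ℝ] H) ∘ₗ LinearMap.adjoint (L p : E →ₗ[ℝ] H)) = c₀)
    (μ : Measure E) [μ.IsAddHaarMeasure] {f : E → ℝ} (hf : Continuous f) :
    Tendsto (fun ε : ℝ => (∫ x in {x | ‖F x‖ < ε}, f x ∂μ) / (μ {x | ‖F x‖ < ε}).toReal)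
      (𝓝[>] 0)
      (𝓝 ((∫ x in F ⁻¹' {0}, f x ∂μH[d]) / (μH[d] (F ⁻¹' {0})).toReal)) := by
  obtain ⟨hV0, hV1, c, hc0, hc1, hlim⟩ := tendsto_tube hd hF hproper hne L hL hc₀ hdet
  have hVc : IsCompact (F ⁻¹' {0}) := by
    have : F ⁻¹' {0} = {x | ‖F x‖ ≤ 0} := by ext x; simp
    rw [this]; exact hproper 0
  have h1 := hlim (fun _ => 1) continuous_const
  simp only [ENNReal.coe_one, lintegral_const, one_mul, Measure.restrict_apply,
      MeasurableSet.univ, Set.univ_inter] at h1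
  have hfinV : ∀ g : E → ℝ≥0, Continuous g → ∫⁻ x in F ⁻¹' {0}, g x ∂μH[d] ≠ ∞ := by
    intro g hg
    obtain ⟨B, hB⟩ := (hVc.image hg).bddAbove
    refine ne_top_of_le_ne_top (ENNReal.mul_ne_top (ENNReal.coe_ne_top (r := B)) hV1) ?_
    rw [← setLIntegral_const]
    exact setLIntegral_mono' hVc.isClosed.measurableSet fun x hx => by
      exact_mod_cast hB (Set.mem_image_of_mem g hx)
  have hquot : ∀ g : E → ℝ≥0, Continuous g →
      Tendsto (fun ε : ℝ => (∫⁻ x in {x | ‖F x‖ < ε}, g x ∂μ).toReal /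
        (μ {x | ‖F x‖ < ε}).toReal) (𝓝[>] 0)
      (𝓝 ((∫⁻ x in F ⁻¹' {0}, g x ∂μH[d]).toReal / (μH[d] (F ⁻¹' {0})).toReal)) := by
    intro g hg
    have h2 := ENNReal.Tendsto.div (hlim g hg) (Or.inr (mul_ne_zero hc0 hV0)) h1
      (Or.inl (ENNReal.mul_ne_top hc1 hV1))
    rw [ENNReal.mul_div_mul_left _ _ hc0 hc1] at h2
    have h3 := (ENNReal.tendsto_toReal (ENNReal.div_ne_top (hfinV g hg) hV0)).comp h2
    rw [ENNReal.toReal_div] at h3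
    refine h3.congr' ?_
    filter_upwards [self_mem_nhdsWithin] with ε hε
    rw [Function.comp_apply, ← lintegral_div_eq_tube_div μ F g hε, ENNReal.toReal_div]
  have hfV : Integrable f ((μH[d] : Measure E).restrict (F ⁻¹' {0})) := by
    obtain ⟨B, hB⟩ := (hVc.image hf.norm).bddAbove
    have : IsFiniteMeasure ((μH[d] : Measure E).restrict (F ⁻¹' {0})) :=
      ⟨by rw [Measure.restrict_apply_univ]; exact hV1.lt_top⟩
    refine Integrable.of_bound hf.aestronglyMeasurable B ?_
    filter_upwards [ae_restrict_mem hVc.isClosed.measurableSet] with x hx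
    exact hB (Set.mem_image_of_mem (fun x => ‖f x‖) hx)
  have hfA : ∀ ε : ℝ, IntegrableOn f {x | ‖F x‖ < ε} μ := fun ε =>
    (hf.continuousOn.integrableOn_compact (hproper ε)).mono_set fun x hx => (show ‖F x‖ < ε from hx).le
  have h4 := (hquot (fun x => (f x).toNNReal) (by fun_prop)).sub
    (hquot (fun x => (-f x).toNNReal) (by fun_prop))
  rw [integral_eq_lintegral_pos_part_sub_lintegral_neg_part hfV, sub_div]
  refine h4.congr fun ε => ?_
  rw [integral_eq_lintegral_pos_part_sub_lintegral_neg_part (hfA ε), sub_div]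
  rfl

/-- Averages over the tubes `‖F‖ < ε` converge to the average over the zero set, when the normal
Jacobian is constant along it. The measure `μ` on `E` may be any Haar measure. -/
theorem tendsto_average {d : ℕ} (hd : finrank ℝ E = d + finrank ℝ H) {F : E → H}
    (hF : Continuous F) (hproper : ∀ R : ℝ, IsCompact {x | ‖F x‖ ≤ R})
    (hne : (F ⁻¹' {0}).Nonempty) (L : E → E →L[ℝ] H)
    (hL : ∀ p, F p = 0 → HasStrictFDerivAt F (L p) p) {c₀ : ℝ} (hc₀ : c₀ ≠ 0)
    (hdet : ∀ p, F p = 0 →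
      LinearMap.det ((L p : E →ₗ[ℝ] H) ∘ₗ LinearMap.adjoint (L p : E →ₗ[ℝ] H)) = c₀)
    (μ : Measure E) [μ.IsAddHaarMeasure] {f : E → ℂ} (hf : Continuous f) :
    Tendsto (fun ε : ℝ => (∫ x in {x | ‖F x‖ < ε}, f x ∂μ) / ((μ {x | ‖F x‖ < ε}).toReal : ℂ))
      (𝓝[>] 0)
      (𝓝 ((∫ x in F ⁻¹' {0}, f x ∂μH[d]) / ((μH[d] (F ⁻¹' {0})).toReal : ℂ))) := by
  obtain ⟨hV0, hV1, -⟩ := tendsto_tube hd hF hproper hne L hL hc₀ hdet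
  have hVc : IsCompact (F ⁻¹' {0}) := by
    have : F ⁻¹' {0} = {x | ‖F x‖ ≤ 0} := by ext x; simp
    rw [this]; exact hproper 0
  have hfV : Integrable f ((μH[d] : Measure E).restrict (F ⁻¹' {0})) := by
    obtain ⟨B, hB⟩ := (hVc.image hf.norm).bddAbove
    have : IsFiniteMeasure ((μH[d] : Measure E).restrict (F ⁻¹' {0})) :=
      ⟨by rw [Measure.restrict_apply_univ]; exact hV1.lt_top⟩
    refine Integrable.of_bound hf.aestronglyMeasurable B ?_
    filter_upwards [ae_restrict_mem hVc.isClosed.measurableSet] with x hx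
    exact hB (Set.mem_image_of_mem (fun x => ‖f x‖) hx)
  have hfA : ∀ ε : ℝ, IntegrableOn f {x | ‖F x‖ < ε} μ := fun ε =>
    (hf.continuousOn.integrableOn_compact (hproper ε)).mono_set fun x hx => (show ‖F x‖ < ε from hx).le
  have hre := tendsto_average_real hd hF hproper hne L hL hc₀ hdet μ (Complex.continuous_re.comp hf)
  have him := tendsto_average_real hd hF hproper hne L hL hc₀ hdet μ (Complex.continuous_im.comp hf)
  have h := ((Complex.continuous_ofReal.tendsto _).comp hre).add
    (((Complex.continuous_ofReal.tendsto _).comp him).mul_const Complex.I)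
  have key : ∀ (ν : Measure E) (a : ℝ), Integrable f ν →
      (((∫ x, (f x).re ∂ν) / a : ℝ) : ℂ) + (((∫ x, (f x).im ∂ν) / a : ℝ) : ℂ) * Complex.I =
        (∫ x, f x ∂ν) / (a : ℂ) := by
    intro ν a hν
    have := integral_re_add_im hν
    simp only [RCLike.re_to_complex, RCLike.im_to_complex, RCLike.I_to_complex] at this
    rw [← this]
    push_cast
    simp only [Complex.coe_algebraMap]
    ring
  rw [← key _ _ hfV]
  refine h.congr fun ε => ?_
  rw [← key _ _ (hfA ε)]
  rfl

end Ratio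

/-! ### Normal Jacobian of a projected isometry -/

section NormalJacobian
variable {M : Type*} [NormedAddCommGroup M] [InnerProductSpace ℝ M] [FiniteDimensional ℝ M]

theorem det_one_sub_comp_comm {X Y : Type*} [AddCommGroup X] [Module ℝ X] [FiniteDimensional ℝ X]
    [AddCommGroup Y] [Module ℝ Y] [FiniteDimensional ℝ Y] (a : X →ₗ[ℝ] Y) (b : Y →ₗ[ℝ] X) :
    LinearMap.det (LinearMap.id - a ∘ₗ b) = LinearMap.det (LinearMap.id - b ∘ₗ a) := by
  let v := Module.finBasis ℝ X
  let w := Module.finBasis ℝ Y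
  rw [← LinearMap.det_toMatrix w, ← LinearMap.det_toMatrix v, map_sub, map_sub,
    LinearMap.toMatrix_id, LinearMap.toMatrix_id, LinearMap.toMatrix_comp w v w,
    LinearMap.toMatrix_comp v w v, Matrix.det_one_sub_mul_comm]

/-- Normal Jacobian of `L = 2 P A` on `N`, where `A` is an isometry and `P` the projection to `K`,
when compressing `A⁻¹ P A` to `Nᗮ` gives one half of the identity. With `a = P A` on `Nᗮ` and `b`
its adjoint, `L L* = 4 (1 - a b)`, and `det (1 - a b) = det (1 - b a)`. -/
theorem det_comp_adjoint_eq (N K : Submodule ℝ M) (A : M ≃ₗᵢ[ℝ] M)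
    (hA : ∀ B ∈ Nᗮ, Nᗮ.starProjection (A.symm (K.starProjection (A B))) = (1 / 2 : ℝ) • B)
    (L : N →ₗ[ℝ] K) (hL : ∀ y : N, (L y : M) = (2 : ℝ) • K.starProjection (A y)) :
    LinearMap.det (L ∘ₗ LinearMap.adjoint L) =
      4 ^ finrank ℝ K * (1 / 2) ^ finrank ℝ Nᗮ := by
  let a : Nᗮ →ₗ[ℝ] K :=
    (K.orthogonalProjectionOnto : M →ₗ[ℝ] K) ∘ₗ (A.toLinearEquiv : M →ₗ[ℝ] M) ∘ₗ Nᗮ.subtype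
  let b : K →ₗ[ℝ] Nᗮ :=
    (Nᗮ.orthogonalProjectionOnto : M →ₗ[ℝ] Nᗮ) ∘ₗ (A.symm.toLinearEquiv : M →ₗ[ℝ] M) ∘ₗ K.subtype
  let L' : K →ₗ[ℝ] N := (2 : ℝ) •
    ((N.orthogonalProjectionOnto : M →ₗ[ℝ] N) ∘ₗ (A.symm.toLinearEquiv : M →ₗ[ℝ] M) ∘ₗ K.subtype)
  have hL' : L' = LinearMap.adjoint L := by
    rw [LinearMap.eq_adjoint_iff]
    intro S y
    have h1 : inner ℝ (L' S) y = 2 * inner ℝ (N.orthogonalProjectionOnto (A.symm S)) y := by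
      simp only [L', LinearMap.smul_apply, real_inner_smul_left]; rfl
    rw [h1, Submodule.inner_orthogonalProjectionOnto_eq_of_mem_right, Submodule.coe_inner, hL, real_inner_smul_right,
      ← Submodule.inner_starProjection_left_eq_right, Submodule.starProjection_eq_self_iff.2 S.2,
      ← A.inner_map_map, A.apply_symm_apply]
  have hab : L ∘ₗ LinearMap.adjoint L = (4 : ℝ) • (LinearMap.id - a ∘ₗ b) := by
    rw [← hL']
    ext S
    have h2 : ((L' S : N) : M) = (2 : ℝ) • N.starProjection (A.symm S) := rfl
    have h3 : ((a (b S) : K) : M) = K.starProjection (A (Nᗮ.starProjection (A.symm S))) := rfl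
    have h4 : N.starProjection (A.symm S) = A.symm S - Nᗮ.starProjection (A.symm S) := by
      rw [Submodule.starProjection_orthogonal_val]; abel
    have h5 : K.starProjection (S : M) = S := Submodule.starProjection_eq_self_iff.2 S.2
    simp only [LinearMap.comp_apply, LinearMap.smul_apply, LinearMap.sub_apply, LinearMap.id_apply,
      Submodule.coe_smul, Submodule.coe_sub]
    rw [hL, h2, h3, h4, map_smul, map_smul, map_sub, map_sub, A.apply_symm_apply, h5, smul_smul]
    norm_num
  have hba : LinearMap.id - b ∘ₗ a = (1 / 2 : ℝ) • LinearMap.id := by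
    ext B
    have h3 : ((b (a B) : Nᗮ) : M) = Nᗮ.starProjection (A.symm (K.starProjection (A B))) := rfl
    simp only [LinearMap.comp_apply, LinearMap.smul_apply, LinearMap.sub_apply, LinearMap.id_apply,
      Submodule.coe_smul, Submodule.coe_sub]
    rw [h3, hA B B.2]
    module
  rw [hab, LinearMap.det_smul, det_one_sub_comp_comm, hba, LinearMap.det_smul, LinearMap.det_id,
    mul_one]

end NormalJacobian

/-! ### The map `Y ↦ Y* Y - 1` on `𝒩_{m,n}` -/

section MatrixSpace

open scoped ComplexConjugate

/-- The space `Mₙ(ℂ)` with the Frobenius norm, as a Euclidean space. -/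
abbrev MatSpace (n : ℕ) := EuclideanSpace ℂ (Fin n × Fin n)

/-- The matrix whose entries are the coordinates of a point of `MatSpace n`. -/
def matEquiv (n : ℕ) : MatSpace n ≃ₗ[ℝ] Matrix (Fin n) (Fin n) ℂ where
  toFun X := Matrix.of fun i j => X (i, j)
  invFun A := WithLp.toLp 2 fun p => A p.1 p.2
  map_add' _ _ := rfl
  map_smul' _ _ := rfl
  left_inv _ := rfl
  right_inv _ := rfl

theorem matEquiv_apply {n : ℕ} (X : MatSpace n) (i j : Fin n) : matEquiv n X i j = X (i, j) := rfl

theorem inner_eq_trace {n : ℕ} (X Y : MatSpace n) :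
    inner ℝ X Y = (Matrix.trace ((matEquiv n X)ᴴ * matEquiv n Y)).re := by
  rw [PiLp.inner_apply, Fintype.sum_prod_type_right, Matrix.trace, Complex.re_sum]
  refine Finset.sum_congr rfl fun j _ => ?_
  rw [Matrix.diag_apply, Matrix.mul_apply, Complex.re_sum]
  refine Finset.sum_congr rfl fun i _ => ?_
  rw [Complex.inner, mul_comm]
  rfl

theorem norm_eq_frobNorm {n : ℕ} (X : MatSpace n) : ‖X‖ = frobNorm n (matEquiv n X) := by
  rw [frobNorm, ← inner_eq_trace, real_inner_self_eq_norm_sq, Real.sqrt_sq (norm_nonneg _)]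

/-- The subspace `𝒩_{m,n}`, over the reals. -/
def upperSpace (n m : ℕ) : Submodule ℝ (MatSpace n) where
  carrier := {X | ∀ i j : Fin n, (j : ℕ) < (i : ℕ) → (i : ℕ) < m → X (i, j) = 0}
  add_mem' hX hY i j h1 h2 := by simp [hX i j h1 h2, hY i j h1 h2]
  zero_mem' i j _ _ := rfl
  smul_mem' c X hX i j h1 h2 := by simp [hX i j h1 h2]

/-- The real vector space of Hermitian matrices. -/
def hermSpace (n : ℕ) : Submodule ℝ (MatSpace n) where
  carrier := {X | (matEquiv n X)ᴴ = matEquiv n X}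
  add_mem' {X Y} hX hY := by
    simp only [Set.mem_ofPred_eq] at hX hY ⊢
    rw [map_add, Matrix.conjTranspose_add, hX, hY]
  zero_mem' := by simp
  smul_mem' c X hX := by
    simp only [Set.mem_ofPred_eq] at hX ⊢
    rw [map_smul, Matrix.conjTranspose_smul, hX]; simp

theorem mem_hermSpace {n : ℕ} {X : MatSpace n} :
    X ∈ hermSpace n ↔ (matEquiv n X)ᴴ = matEquiv n X := Iff.rfl

theorem matEquiv_starProjection_hermSpace {n : ℕ} (Z : MatSpace n) :
    matEquiv n ((hermSpace n).starProjection Z) =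
      (1 / 2 : ℝ) • (matEquiv n Z + (matEquiv n Z)ᴴ) := by
  have h : (hermSpace n).starProjection Z =
      (matEquiv n).symm ((1 / 2 : ℝ) • (matEquiv n Z + (matEquiv n Z)ᴴ)) := by
    refine Submodule.eq_starProjection_of_mem_of_inner_eq_zero ?_ fun W hW => ?_
    · rw [mem_hermSpace, LinearEquiv.apply_symm_apply, Matrix.conjTranspose_smul,
        Matrix.conjTranspose_add, Matrix.conjTranspose_conjTranspose, add_comm]
      simp
    · rw [mem_hermSpace] at hW
      rw [inner_eq_trace, map_sub, LinearEquiv.apply_symm_apply]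
      set z := matEquiv n Z
      set w := matEquiv n W
      have h1 : z - (1 / 2 : ℝ) • (z + zᴴ) = (1 / 2 : ℝ) • (z - zᴴ) := by module
      have h2 : (Matrix.trace (zᴴ * w)).re = (Matrix.trace (z * w)).re := by
        have : Matrix.trace (z * w) = star (Matrix.trace (zᴴ * w)) := by
          rw [← Matrix.trace_conjTranspose, Matrix.conjTranspose_mul, hW,
            Matrix.conjTranspose_conjTranspose, Matrix.trace_mul_comm]
        rw [this]; simp
      rw [h1, Matrix.conjTranspose_smul, Matrix.conjTranspose_sub,
        Matrix.conjTranspose_conjTranspose, Matrix.smul_mul, Matrix.trace_smul, Matrix.sub_mul,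
        Matrix.trace_sub]
      simp [h2]
  rw [h, LinearEquiv.apply_symm_apply]

/-- The real-bilinear map `(X, Y) ↦ X* Y`. -/
def gram (n : ℕ) : MatSpace n →L[ℝ] MatSpace n →L[ℝ] MatSpace n :=
  LinearMap.toContinuousBilinearMap <| LinearMap.mk₂ ℝ
    (fun X Y => (matEquiv n).symm ((matEquiv n X)ᴴ * matEquiv n Y))
    (fun X X' Y => by rw [map_add, Matrix.conjTranspose_add, Matrix.add_mul, map_add])
    (fun c X Y => by
      rw [map_smul, Matrix.conjTranspose_smul, Matrix.smul_mul]; simp)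
    (fun X Y Y' => by rw [map_add, Matrix.mul_add, map_add])
    (fun c X Y => by rw [map_smul, Matrix.mul_smul, map_smul])

theorem matEquiv_gram {n : ℕ} (X Y : MatSpace n) :
    matEquiv n (gram n X Y) = (matEquiv n X)ᴴ * matEquiv n Y :=
  (matEquiv n).apply_symm_apply _

/-- The map `Y ↦ Y* Y - 1` from `𝒩_{m,n}` to the Hermitian matrices. Its value is Hermitian
already; the orthogonal projection only serves to land in the subtype. -/
def defect (n m : ℕ) (y : upperSpace n m) : hermSpace n :=
  (hermSpace n).orthogonalProjectionOnto (gram n y y - (matEquiv n).symm 1)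

theorem matEquiv_defect {n m : ℕ} (y : upperSpace n m) :
    matEquiv n (defect n m y) = (matEquiv n y)ᴴ * matEquiv n y - 1 := by
  have h1 : matEquiv n (gram n y y - (matEquiv n).symm 1) =
      (matEquiv n y)ᴴ * matEquiv n y - 1 := by
    rw [map_sub, matEquiv_gram, LinearEquiv.apply_symm_apply]
  have h2 : ((defect n m y : hermSpace n) : MatSpace n) =
    (hermSpace n).starProjection (gram n y y - (matEquiv n).symm 1) := rfl
  rw [h2, matEquiv_starProjection_hermSpace, h1, Matrix.conjTranspose_sub,
    Matrix.conjTranspose_mul, Matrix.conjTranspose_conjTranspose, Matrix.conjTranspose_one]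
  module

theorem norm_defect {n m : ℕ} (y : upperSpace n m) :
    ‖defect n m y‖ = frobNorm n ((matEquiv n y)ᴴ * matEquiv n y - 1) := by
  rw [← matEquiv_defect, ← norm_eq_frobNorm, Submodule.coe_norm]

theorem defect_eq_zero_iff {n m : ℕ} (y : upperSpace n m) :
    defect n m y = 0 ↔ (matEquiv n y)ᴴ * matEquiv n y = 1 := by
  rw [← sub_eq_zero (b := (1 : Matrix (Fin n) (Fin n) ℂ)), ← matEquiv_defect,
    LinearEquiv.map_eq_zero_iff, ZeroMemClass.coe_eq_zero]

theorem continuous_defect (n m : ℕ) : Continuous (defect n m) := by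
  unfold defect
  fun_prop

/-- The derivative `Y ↦ V* Y + Y* V` of `defect` at `V`, with the same projection to the subtype
of Hermitian matrices. -/
def defectDeriv (n m : ℕ) (p : upperSpace n m) : upperSpace n m →L[ℝ] hermSpace n :=
  (hermSpace n).orthogonalProjectionOnto ∘L (gram n p + (gram n).flip p) ∘L
    (upperSpace n m).subtypeL

theorem hasStrictFDerivAt_defect {n m : ℕ} (p : upperSpace n m) :
    HasStrictFDerivAt (defect n m) (defectDeriv n m p) p := by
  have h1 : HasStrictFDerivAt (fun y : upperSpace n m => (y : MatSpace n))
      (upperSpace n m).subtypeL p := (upperSpace n m).subtypeL.hasStrictFDerivAt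
  have h2 := ((gram n).isBoundedBilinearMap.hasStrictFDerivAt ((p : MatSpace n), (p : MatSpace n))).comp
    p (h1.prodMk h1)
  have h3 := (hermSpace n).orthogonalProjectionOnto.hasStrictFDerivAt.comp p
    (h2.sub_const ((matEquiv n).symm 1))
  refine h3.congr_fderiv ?_
  ext y
  rfl

end MatrixSpace

/-! ### Constancy of the normal Jacobian along `𝒱_{m,n}` -/

section UnitaryGeometry

/-- Left multiplication by `V*`, for `V` unitary, as an isometry of `Mₙ(ℂ)`. -/
def leftMulIso {n : ℕ} (V : Matrix (Fin n) (Fin n) ℂ) (hV : Vᴴ * V = 1) :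
    MatSpace n ≃ₗᵢ[ℝ] MatSpace n where
  toFun X := (matEquiv n).symm (Vᴴ * matEquiv n X)
  invFun X := (matEquiv n).symm (V * matEquiv n X)
  map_add' X Y := by rw [map_add, Matrix.mul_add, map_add]
  map_smul' c X := by rw [map_smul, Matrix.mul_smul, map_smul]; rfl
  left_inv X := by
    change (matEquiv n).symm (V * matEquiv n ((matEquiv n).symm (Vᴴ * matEquiv n X))) = X
    rw [LinearEquiv.apply_symm_apply, ← Matrix.mul_assoc, mul_eq_one_comm.1 hV,
      Matrix.one_mul, LinearEquiv.symm_apply_apply]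
  right_inv X := by
    change (matEquiv n).symm (Vᴴ * matEquiv n ((matEquiv n).symm (V * matEquiv n X))) = X
    rw [LinearEquiv.apply_symm_apply, ← Matrix.mul_assoc, hV,
      Matrix.one_mul, LinearEquiv.symm_apply_apply]
  norm_map' X := by
    change ‖(matEquiv n).symm (Vᴴ * matEquiv n X)‖ = ‖X‖
    rw [norm_eq_frobNorm, norm_eq_frobNorm, LinearEquiv.apply_symm_apply, frobNorm, frobNorm,
      Matrix.conjTranspose_mul, Matrix.conjTranspose_conjTranspose, Matrix.mul_assoc,
      ← Matrix.mul_assoc V, mul_eq_one_comm.1 hV, Matrix.one_mul]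

theorem matEquiv_leftMulIso {n : ℕ} (V : Matrix (Fin n) (Fin n) ℂ) (hV : Vᴴ * V = 1)
    (X : MatSpace n) : matEquiv n (leftMulIso V hV X) = Vᴴ * matEquiv n X :=
  (matEquiv n).apply_symm_apply _

theorem matEquiv_leftMulIso_symm {n : ℕ} (V : Matrix (Fin n) (Fin n) ℂ) (hV : Vᴴ * V = 1)
    (X : MatSpace n) : matEquiv n ((leftMulIso V hV).symm X) = V * matEquiv n X :=
  (matEquiv n).apply_symm_apply _

theorem apply_eq_zero_of_mem_orthogonal {n m : ℕ} {B : MatSpace n} (hB : B ∈ (upperSpace n m)ᗮ)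
    (i j : Fin n) (hij : ¬ ((j : ℕ) < (i : ℕ) ∧ (i : ℕ) < m)) : B (i, j) = 0 := by
  have hmem : EuclideanSpace.single (i, j) (B (i, j)) ∈ upperSpace n m := by
    intro k l h1 h2
    rw [PiLp.single_apply, if_neg]
    intro h
    obtain ⟨rfl, rfl⟩ := Prod.mk.inj h
    exact hij ⟨h1, h2⟩
  have h := (Submodule.mem_orthogonal _ _).1 hB _ hmem
  rw [PiLp.inner_apply, Finset.sum_eq_single (i, j)] at h
  · rw [PiLp.single_apply, if_pos rfl] at h
    exact inner_self_eq_zero.1 h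
  · intro q _ hq
    rw [PiLp.single_apply, if_neg hq, inner_zero_left]
  · simp

/-- The reason why the normal Jacobian of `Y ↦ Y* Y - 1` is constant: for `V ∈ 𝒩_{m,n}` and
`B` orthogonal to `𝒩_{m,n}`, the entries of `V B* V` with index `j < i < m` vanish, since a
nonzero term `V i k * conj (B l k) * V l j` would need `i ≤ k < l ≤ j`. -/
theorem mul_conjTranspose_mul_mem {n m : ℕ} {V B : MatSpace n} (hV : V ∈ upperSpace n m)
    (hB : B ∈ (upperSpace n m)ᗮ) :
    (matEquiv n).symm (matEquiv n V * (matEquiv n B)ᴴ * matEquiv n V) ∈ upperSpace n m := by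
  intro i j hji him
  rw [← matEquiv_apply, LinearEquiv.apply_symm_apply, Matrix.mul_apply]
  refine Finset.sum_eq_zero fun l _ => ?_
  rw [Matrix.mul_apply, Finset.sum_mul]
  refine Finset.sum_eq_zero fun k _ => ?_
  rw [Matrix.conjTranspose_apply]
  by_cases hki : (k : ℕ) < i
  · rw [matEquiv_apply, hV i k hki him, zero_mul, zero_mul]
  by_cases hkl : (k : ℕ) < l ∧ (l : ℕ) < m
  · rw [matEquiv_apply V l j, hV l j (by omega) hkl.2, mul_zero]
  · rw [matEquiv_apply B, apply_eq_zero_of_mem_orthogonal hB l k hkl]; simp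

/-- At every point of the zero set of `defect`, the normal Jacobian has the same value. -/
theorem det_defectDeriv {n m : ℕ} (p : upperSpace n m) (hp : defect n m p = 0) :
    LinearMap.det ((defectDeriv n m p : upperSpace n m →ₗ[ℝ] hermSpace n) ∘ₗ
      LinearMap.adjoint (𝕜 := ℝ) (E := upperSpace n m) (F := hermSpace n)
        (defectDeriv n m p : upperSpace n m →ₗ[ℝ] hermSpace n)) =
      4 ^ finrank ℝ (hermSpace n) * (1 / 2) ^ finrank ℝ (upperSpace n m)ᗮ := by
  have hV := (defect_eq_zero_iff p).1 hp
  set V := matEquiv n p with hVdef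
  refine det_comp_adjoint_eq _ _ (leftMulIso V hV) (fun B hB => ?_) _ fun y => ?_
  · have h1 : (leftMulIso V hV).symm ((hermSpace n).starProjection (leftMulIso V hV B)) =
        (1 / 2 : ℝ) • B + (1 / 2 : ℝ) • (matEquiv n).symm (V * (matEquiv n B)ᴴ * V) := by
      apply (matEquiv n).injective
      rw [matEquiv_leftMulIso_symm, matEquiv_starProjection_hermSpace, matEquiv_leftMulIso,
        map_add, map_smul, map_smul, LinearEquiv.apply_symm_apply, Matrix.mul_smul, Matrix.mul_add,
        ← Matrix.mul_assoc, mul_eq_one_comm.1 hV, Matrix.one_mul,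
        Matrix.conjTranspose_mul, Matrix.conjTranspose_conjTranspose, smul_add, Matrix.mul_assoc]
    rw [h1, map_add, map_smul, map_smul, Submodule.starProjection_eq_self_iff.2 hB,
      Submodule.starProjection_orthogonal_apply_eq_zero (mul_conjTranspose_mul_mem p.2 hB),
      smul_zero, add_zero]
  · apply (matEquiv n).injective
    have h2 : (((defectDeriv n m p : upperSpace n m →ₗ[ℝ] hermSpace n) y : hermSpace n) :
        MatSpace n) = (hermSpace n).starProjection (gram n p y + gram n y p) := rfl
    rw [h2, matEquiv_starProjection_hermSpace, map_smul, matEquiv_starProjection_hermSpace,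
      map_add, matEquiv_gram, matEquiv_gram, matEquiv_leftMulIso, ← hVdef,
      Matrix.conjTranspose_add, Matrix.conjTranspose_mul, Matrix.conjTranspose_mul,
      Matrix.conjTranspose_conjTranspose, Matrix.conjTranspose_conjTranspose]
    module

theorem isCompact_defect_le (n m : ℕ) (R : ℝ) : IsCompact {y | ‖defect n m y‖ ≤ R} := by
  refine Metric.isCompact_of_isClosed_isBounded
    (isClosed_le (continuous_defect n m).norm continuous_const) ?_
  -- `‖Y‖² = re tr (Y* Y - 1) + n`, and the trace is the inner product with the identity
  refine isBounded_iff_forall_norm_le.2 ⟨‖(matEquiv n).symm 1‖ * R + n + 1, fun y hy => ?_⟩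
  have hyR : ‖(defect n m y : MatSpace n)‖ ≤ R := hy
  have h1 : ‖y‖ ^ 2 = inner ℝ ((matEquiv n).symm 1) (defect n m y : MatSpace n) + n := by
    rw [Submodule.coe_norm, ← real_inner_self_eq_norm_sq, inner_eq_trace, inner_eq_trace,
      matEquiv_defect, LinearEquiv.apply_symm_apply, Matrix.conjTranspose_one, Matrix.one_mul,
      Matrix.trace_sub, Matrix.trace_one]
    simp
  have h2 := real_inner_le_norm ((matEquiv n).symm 1) (defect n m y : MatSpace n)
  have h3 : ‖(matEquiv n).symm 1‖ * ‖(defect n m y : MatSpace n)‖ ≤ ‖(matEquiv n).symm 1‖ * R := by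
    gcongr
  nlinarith [sq_nonneg (‖y‖ - 1)]

theorem defect_nonempty (n m : ℕ) : (defect n m ⁻¹' {0}).Nonempty := by
  have h1 : (matEquiv n).symm 1 ∈ upperSpace n m := by
    intro i j hji _
    rw [← matEquiv_apply, LinearEquiv.apply_symm_apply, Matrix.one_apply_ne]
    rintro rfl
    exact lt_irrefl _ hji
  refine ⟨⟨_, h1⟩, (defect_eq_zero_iff _).2 ?_⟩
  simp

end UnitaryGeometry

/-! ### Dimensions -/

section Dimensions

theorem mem_hermSpace_orthogonal {n : ℕ} {X : MatSpace n} :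
    X ∈ (hermSpace n)ᗮ ↔ (matEquiv n X)ᴴ = -matEquiv n X := by
  rw [← Submodule.starProjection_apply_eq_zero_iff, ← (matEquiv n).map_eq_zero_iff,
    matEquiv_starProjection_hermSpace, smul_eq_zero_iff_right (by norm_num), add_comm,
    add_eq_zero_iff_eq_neg]

/-- Multiplication by the imaginary unit exchanges Hermitian and skew-Hermitian matrices. -/
def hermEquivOrthogonal (n : ℕ) : hermSpace n ≃ₗ[ℝ] (hermSpace n)ᗮ where
  toFun X := ⟨Complex.I • (X : MatSpace n), by
    rw [mem_hermSpace_orthogonal]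
    change (Complex.I • matEquiv n X)ᴴ = -(Complex.I • matEquiv n X)
    rw [Matrix.conjTranspose_smul, mem_hermSpace.1 X.2]
    simp⟩
  invFun X := ⟨-(Complex.I • (X : MatSpace n)), by
    rw [mem_hermSpace]
    change (-(Complex.I • matEquiv n X))ᴴ = -(Complex.I • matEquiv n X)
    rw [Matrix.conjTranspose_neg, Matrix.conjTranspose_smul, mem_hermSpace_orthogonal.1 X.2]
    simp⟩
  map_add' X Y := Subtype.ext (smul_add Complex.I (X : MatSpace n) Y)
  map_smul' c X := Subtype.ext (smul_comm Complex.I c (X : MatSpace n))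
  left_inv X := Subtype.ext (by simp [smul_smul])
  right_inv X := Subtype.ext (by simp [smul_smul])

theorem finrank_hermSpace (n : ℕ) : finrank ℝ (hermSpace n) = n ^ 2 := by
  have h1 := (hermSpace n).finrank_add_finrank_orthogonal
  have h2 := (hermEquivOrthogonal n).finrank_eq
  have h3 : finrank ℝ (MatSpace n) = 2 * n ^ 2 := by
    rw [← finrank_mul_finrank ℝ ℂ (MatSpace n), Complex.finrank_real_complex,
      finrank_euclideanSpace, Fintype.card_prod, Fintype.card_fin, sq]
  omega

/-- The coordinates of `𝒩_{m,n}` given by the unconstrained entries. -/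
def coordEquiv (n m : ℕ) : (FreeIdx n m → ℂ) ≃ₗ[ℝ] upperSpace n m where
  toFun x := ⟨WithLp.toLp 2 (embed n m x), fun i j h1 h2 => dif_neg (not_not.2 ⟨h1, h2⟩)⟩
  invFun y p := (y : MatSpace n) p.1
  map_add' x x' := by
    ext p
    change embed n m (x + x') p = embed n m x p + embed n m x' p
    unfold embed
    split_ifs <;> simp
  map_smul' c x := by
    ext p
    change embed n m (c • x) p = c • embed n m x p
    unfold embed
    split_ifs <;> simp
  left_inv x := by
    funext p
    exact dif_pos p.2
  right_inv y := by
    ext p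
    by_cases h : (p.2 : ℕ) < (p.1 : ℕ) ∧ (p.1 : ℕ) < m
    · exact (dif_neg (not_not.2 h)).trans (y.2 p.1 p.2 h.1 h.2).symm
    · exact dif_pos h

theorem coordEquiv_apply {n m : ℕ} (x : FreeIdx n m → ℂ) (p : Fin n × Fin n) :
    (coordEquiv n m x : MatSpace n) p = embed n m x p := rfl

/-- The constrained entries number `m (m - 1) / 2`; both sides are doubled to stay in `ℕ`. -/
theorem card_constrained {n m : ℕ} (hmn : m ≤ n) :
    Fintype.card {p : Fin n × Fin n // (p.2 : ℕ) < (p.1 : ℕ) ∧ (p.1 : ℕ) < m} * 2 =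
      m * (m - 1) := by
  have h1 : ∀ i : Fin n, (Finset.univ.filter fun j : Fin n =>
      (j : ℕ) < (i : ℕ) ∧ (i : ℕ) < m).card = if (i : ℕ) < m then (i : ℕ) else 0 := by
    intro i
    split_ifs with h
    · simp only [h, and_true]
      exact Fin.card_filter_val_lt.trans (min_eq_right i.2.le)
    · simp [h]
  rw [← Finset.sum_range_id_mul_two, Fintype.card_subtype, Finset.card_filter,
    Fintype.sum_prod_type]
  simp only [← Finset.card_filter, h1]
  rw [Fin.sum_univ_eq_sum_range (fun i => if i < m then i else 0) n, ← Finset.sum_filter]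
  congr 2
  ext i
  simp
  omega

theorem finrank_upperSpace {n m : ℕ} (hmn : m ≤ n) :
    finrank ℝ (upperSpace n m) + m * (m - 1) = 2 * n ^ 2 := by
  have h1 := card_constrained hmn
  have h2 : Fintype.card (FreeIdx n m) = n * n -
      Fintype.card {p : Fin n × Fin n // (p.2 : ℕ) < (p.1 : ℕ) ∧ (p.1 : ℕ) < m} := by
    rw [Fintype.card_subtype_compl, Fintype.card_prod, Fintype.card_fin]
  have h3 : Fintype.card {p : Fin n × Fin n // (p.2 : ℕ) < (p.1 : ℕ) ∧ (p.1 : ℕ) < m} ≤ n * n := by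
    simpa using Fintype.card_subtype_le
      fun p : Fin n × Fin n => (p.2 : ℕ) < (p.1 : ℕ) ∧ (p.1 : ℕ) < m
  rw [← (coordEquiv n m).finrank_eq, ← finrank_mul_finrank ℝ ℂ, Complex.finrank_real_complex,
    finrank_fintype_fun_eq_card, sq]
  omega

end Dimensions

/-! ### Transfer of `𝒱_{m,n}` to the subspace -/

section Transfer

theorem preimage_VSet (n m : ℕ) :
    ((↑) : upperSpace n m → MatSpace n) ⁻¹' VSet n m = defect n m ⁻¹' {0} := by
  ext y
  rw [Set.mem_preimage, Set.mem_preimage, Set.mem_singleton_iff, defect_eq_zero_iff]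
  constructor
  · exact fun h => Matrix.mem_unitaryGroup_iff'.1 h.1
  · exact fun h => ⟨Matrix.mem_unitaryGroup_iff'.2 h, y.2⟩

/-- The inclusion of `𝒩_{m,n}` is isometric, so the Hausdorff measure of `𝒱_{m,n}` may be computed
inside `𝒩_{m,n}`. -/
theorem restrict_VSet_hausdorffMeasure (n m d : ℕ) :
    (μH[d] : Measure (MatSpace n)).restrict (VSet n m) =
      ((μH[d] : Measure (upperSpace n m)).map (↑)).restrict (VSet n m) := by
  have hiso : Isometry ((↑) : upperSpace n m → MatSpace n) := isometry_subtype_coe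
  rw [hiso.map_hausdorffMeasure (Or.inl (Nat.cast_nonneg d)), Measure.restrict_restrict_of_subset]
  intro X hX
  exact ⟨⟨X, hX.2⟩, rfl⟩

end Transfer

/-- Integrals over `𝒱_{m,n} = 𝒩_{m,n} ∩ U(n)` with respect to its normalized volume
(Hausdorff) probability measure of dimension `n² - m(m-1)` are limits, as `ε → 0⁺`, of
normalized Lebesgue integrals over the neighbourhoods `{X ∈ 𝒩_{m,n} : ‖X*X - I‖ < ε}`. -/
theorem volume_measure_on_truncated_unitary_manifold_as_limit
    (n m : ℕ) (hm : 1 ≤ m) (hmn : m < n)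
    (f : (Fin n → Fin n → ℂ) → ℂ) (hf : Continuous f) :
    Tendsto (fun ε : ℝ =>
        (∫ x in {x : FreeIdx n m → ℂ |
            frobNorm n ((Matrix.of fun i j : Fin n => embed n m x (i, j))ᴴ *
              (Matrix.of fun i j : Fin n => embed n m x (i, j)) - 1) < ε},
          f (fun i j => embed n m x (i, j))) /
        ((volume {x : FreeIdx n m → ℂ |
            frobNorm n ((Matrix.of fun i j : Fin n => embed n m x (i, j))ᴴ *
              (Matrix.of fun i j : Fin n => embed n m x (i, j)) - 1) < ε}).toReal : ℂ))
      (nhdsWithin (0 : ℝ) (Set.Ioi 0))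
      (nhds ((∫ X in VSet n m, f (fun i j => X (i, j))
            ∂(μH[((n : ℝ) ^ 2 - m * (m - 1))] :
              Measure (EuclideanSpace ℂ (Fin n × Fin n)))) /
          (((μH[((n : ℝ) ^ 2 - m * (m - 1))] :
              Measure (EuclideanSpace ℂ (Fin n × Fin n))) (VSet n m)).toReal : ℂ))) := by
  obtain ⟨d, hd⟩ : ∃ d : ℕ, d + m * (m - 1) = n ^ 2 :=
    ⟨n ^ 2 - m * (m - 1), Nat.sub_add_cancel (by
      rw [sq]; exact Nat.mul_le_mul hmn.le ((Nat.sub_le m 1).trans hmn.le))⟩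
  have hdR : (n : ℝ) ^ 2 - m * (m - 1) = (d : ℝ) := by
    have h : ((d + m * (m - 1) : ℕ) : ℝ) = ((n ^ 2 : ℕ) : ℝ) := by rw [hd]
    push_cast [Nat.cast_sub hm] at h
    linarith
  have hdim : finrank ℝ (upperSpace n m) = d + finrank ℝ (hermSpace n) := by
    have h1 := finrank_upperSpace hmn.le
    have h2 := finrank_hermSpace n
    omega
  -- `FreeIdx n m → ℂ` carries the sup norm, so `φ` is not isometric; only the Haar property of the
  -- transported volume matters
  let φ : (FreeIdx n m → ℂ) ≃L[ℝ] upperSpace n m := (coordEquiv n m).toContinuousLinearEquiv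
  let μ : Measure (upperSpace n m) := (volume : Measure (FreeIdx n m → ℂ)).map φ
  have hμ : μ.IsAddHaarMeasure := φ.isAddHaarMeasure_map _
  let g : MatSpace n → ℂ := fun X => f fun i j => X (i, j)
  have hg : Continuous g := by fun_prop
  have hφ : MeasurableEmbedding φ := φ.toHomeomorph.measurableEmbedding
  have hval : MeasurableEmbedding ((↑) : upperSpace n m → MatSpace n) :=
    (Submodule.closed_of_finiteDimensional (upperSpace n m)).isClosedEmbedding_subtypeVal
      |>.measurableEmbedding
  have key := tendsto_average hdim (continuous_defect n m) (isCompact_defect_le n m)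
    (defect_nonempty n m) (defectDeriv n m) (fun p _ => hasStrictFDerivAt_defect p)
    (c₀ := 4 ^ finrank ℝ (hermSpace n) * (1 / 2) ^ finrank ℝ (upperSpace n m)ᗮ)
    (by positivity) (fun p hp => det_defectDeriv p hp) μ
    (hg.comp continuous_subtype_val)
  rw [hdR]
  have hV : ∫ X in VSet n m, f (fun i j => X (i, j)) ∂(μH[d] : Measure (MatSpace n)) =
      ∫ y in defect n m ⁻¹' {0}, (g ∘ Subtype.val) y ∂μH[d] := by
    rw [restrict_VSet_hausdorffMeasure, hval.setIntegral_map, preimage_VSet]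
    rfl
  have hV1 : (μH[d] : Measure (MatSpace n)) (VSet n m) =
      (μH[d] : Measure (upperSpace n m)) (defect n m ⁻¹' {0}) := by
    rw [← Measure.restrict_apply_self, restrict_VSet_hausdorffMeasure,
      Measure.restrict_apply_self, hval.map_apply, preimage_VSet]
  rw [hV, hV1]
  have hset : ∀ ε : ℝ, {x : FreeIdx n m → ℂ |
            frobNorm n ((Matrix.of fun i j : Fin n => embed n m x (i, j))ᴴ *
              (Matrix.of fun i j : Fin n => embed n m x (i, j)) - 1) < ε} =
      φ ⁻¹' {y | ‖defect n m y‖ < ε} := by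
    intro ε
    ext x
    change _ ↔ ‖defect n m (φ x)‖ < ε
    rw [norm_defect]
    rfl
  refine key.congr fun ε => ?_
  rw [hset ε, ← hφ.map_apply, hφ.setIntegral_map]
  rfl

end
end

section
/- For r > 0 and n ≥ 1, let F_n(r) = e^{−nr} Σ_{a=0}^{n−1} (nr)^a / a!. Then: (i) for every r with 0 < r < 1, lim_{n→∞} F_n(r) = 1; and (ii) for every r > 1, lim_{n→∞} F_n(r) = 0. Consequently, the probability measures on (0,∞) with densities r ↦ e^{−nr} Σ_{a=0}^{n−1} (nr)^a/a! · n/n (i.e., the laws of R_n/n, where R_n has density r ↦ (1/n) e^{−r} Σ_{a=0}^{n−1} r^a/a! on (0,∞)) converge weakly to the uniform distribution on [0,1] as n → ∞. -/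
/-!
The proof rests on one Chernoff-type estimate with `q r = r * exp (1 - r)`, which satisfies
`q r < 1` for every `r ≠ 1`. Since `r ^ a ≤ r ^ n` when `a ≤ n` and `1 ≤ r`, and also when `n ≤ a`
and `0 ≤ r ≤ 1`, comparing the exponential series of `n * r` and of `n` term by term gives
`F n r ≤ q r ^ n` for `1 ≤ r` (`F_le_pow`) and `1 - F n r ≤ q r ^ n` for `0 ≤ r ≤ 1`
(`one_sub_F_le_pow`). Both pointwise limits follow.

Weak convergence is dominated convergence: the same estimate yields the bound
`F n r ≤ (1 + r) * exp (1 - r)`, uniform in `n` and integrable on `(0, ∞)`, and the pointwise limit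
is the indicator of `(0, 1]` off the null set `{1}`.
-/

open MeasureTheory Filter

noncomputable section

/-- `F n r = e^{-nr} ∑_{a=0}^{n-1} (nr)^a / a!`, the probability that a Poisson random
variable of mean `nr` is at most `n-1`; it is also the density of `Rₙ/n`, where `Rₙ` has
density `r ↦ (1/n) e^{-r} ∑_{a=0}^{n-1} r^a/a!` on `(0,∞)`. -/
def F (n : ℕ) (r : ℝ) : ℝ :=
  Real.exp (-(n * r)) * ∑ a ∈ Finset.range n, (n * r) ^ a / a.factorial

lemma F_nonneg (n : ℕ) {r : ℝ} (hr : 0 ≤ r) : 0 ≤ F n r := by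
  unfold F
  positivity

lemma F_le_one (n : ℕ) {r : ℝ} (hr : 0 ≤ r) : F n r ≤ 1 := by
  unfold F
  have h := Real.sum_le_exp_of_nonneg (x := n * r) (by positivity) n
  calc _ ≤ Real.exp (-(n * r)) * Real.exp (n * r) := by gcongr
    _ = 1 := by rw [← Real.exp_add]; simp

lemma exp_mul_pow_eq (n : ℕ) (r : ℝ) :
    Real.exp (-(n * r)) * (r ^ n * Real.exp n) = (r * Real.exp (1 - r)) ^ n := by
  rw [mul_pow, ← Real.exp_nat_mul, mul_left_comm, ← Real.exp_add]
  ring_nf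

/-- Upper Chernoff bound: replace `r ^ a` by `r ^ n` in each term, then bound the partial sum of
the exponential series of `n`. -/
lemma F_le_pow (n : ℕ) {r : ℝ} (hr : 1 ≤ r) : F n r ≤ (r * Real.exp (1 - r)) ^ n := by
  rw [← exp_mul_pow_eq]
  unfold F
  gcongr
  calc ∑ a ∈ Finset.range n, (n * r) ^ a / a.factorial
      ≤ ∑ a ∈ Finset.range n, r ^ n * ((n : ℝ) ^ a / a.factorial) := by
        refine Finset.sum_le_sum fun a ha => ?_
        have h : r ^ a ≤ r ^ n := pow_le_pow_right₀ hr (Finset.mem_range.1 ha).le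
        rw [mul_pow, mul_comm, mul_div_assoc]
        gcongr
    _ = r ^ n * ∑ a ∈ Finset.range n, (n : ℝ) ^ a / a.factorial := by rw [Finset.mul_sum]
    _ ≤ r ^ n * Real.exp n := by
        gcongr
        exact Real.sum_le_exp_of_nonneg (by positivity) n

lemma exp_eq_sum_add_tsum (x : ℝ) (n : ℕ) :
    Real.exp x = ∑ a ∈ Finset.range n, x ^ a / a.factorial
      + ∑' a : ℕ, x ^ (a + n) / (a + n).factorial := by
  rw [(Real.summable_pow_div_factorial x).sum_add_tsum_nat_add n, Real.exp_eq_exp_ℝ,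
    NormedSpace.exp_eq_tsum_div]

/-- Lower Chernoff bound: the complementary event is the tail `a ≥ n` of the exponential series,
where `r ^ a ≤ r ^ n`. -/
lemma one_sub_F_le_pow (n : ℕ) {r : ℝ} (hr0 : 0 ≤ r) (hr : r ≤ 1) :
    1 - F n r ≤ (r * Real.exp (1 - r)) ^ n := by
  have h1 := exp_eq_sum_add_tsum (n * r) n
  have h2 := exp_eq_sum_add_tsum n n
  have hs (x : ℝ) : Summable fun a : ℕ => x ^ (a + n) / (a + n).factorial :=
    (summable_nat_add_iff n).2 (Real.summable_pow_div_factorial x)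
  have h3 : ∑' a : ℕ, (n * r) ^ (a + n) / (a + n).factorial ≤ r ^ n * Real.exp n := by
    calc ∑' a : ℕ, (n * r) ^ (a + n) / (a + n).factorial
        ≤ ∑' a : ℕ, r ^ n * ((n : ℝ) ^ (a + n) / (a + n).factorial) := by
          refine (hs _).tsum_le_tsum (fun a => ?_) ((hs _).mul_left _)
          have h : r ^ (a + n) ≤ r ^ n := pow_le_pow_of_le_one hr0 hr (by omega)
          rw [mul_pow, mul_comm, mul_div_assoc]
          gcongr
      _ = r ^ n * ∑' a : ℕ, (n : ℝ) ^ (a + n) / (a + n).factorial := tsum_mul_left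
      _ ≤ r ^ n * Real.exp n := by
          gcongr
          have : (0 : ℝ) ≤ ∑ a ∈ Finset.range n, (n : ℝ) ^ a / a.factorial := by positivity
          linarith
  have h4 : 1 - F n r
      = Real.exp (-(n * r)) * ∑' a : ℕ, (n * r) ^ (a + n) / (a + n).factorial := by
    have h5 : Real.exp (-(n * r)) * Real.exp (n * r) = 1 := by rw [← Real.exp_add]; simp
    rw [h1, mul_add] at h5
    unfold F
    linarith
  rw [h4, ← exp_mul_pow_eq]
  gcongr

lemma mul_exp_lt_one {r : ℝ} (hr : r ≠ 1) : r * Real.exp (1 - r) < 1 := by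
  have h := Real.add_one_lt_exp (x := r - 1) (by simpa [sub_eq_zero] using hr)
  calc r * Real.exp (1 - r) < Real.exp (r - 1) * Real.exp (1 - r) := by gcongr; linarith
    _ = 1 := by rw [← Real.exp_add]; simp

lemma tendsto_mul_exp_pow {r : ℝ} (hr0 : 0 ≤ r) (hr : r ≠ 1) :
    Tendsto (fun n : ℕ => (r * Real.exp (1 - r)) ^ n) atTop (nhds 0) :=
  tendsto_pow_atTop_nhds_zero_of_lt_one (by positivity) (mul_exp_lt_one hr)

lemma tendsto_F_one {r : ℝ} (hr0 : 0 < r) (hr : r < 1) :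
    Tendsto (fun n : ℕ => F n r) atTop (nhds 1) := by
  have h := (tendsto_mul_exp_pow hr0.le hr.ne).const_sub 1
  rw [sub_zero] at h
  exact tendsto_of_tendsto_of_tendsto_of_le_of_le h tendsto_const_nhds
    (fun n => by have := one_sub_F_le_pow n hr0.le hr.le; simp only; linarith)
    (fun n => F_le_one n hr0.le)

lemma tendsto_F_zero {r : ℝ} (hr : 1 < r) :
    Tendsto (fun n : ℕ => F n r) atTop (nhds 0) :=
  squeeze_zero (fun n => F_nonneg n (by linarith)) (fun n => F_le_pow n hr.le)
    (tendsto_mul_exp_pow (by linarith) hr.ne.symm)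

/-- A bound on `F n` independent of `n`, dominating both `1` on `[0, 1]` and `r * exp (1 - r)` on
`[1, ∞)`. -/
lemma F_le_dominating (n : ℕ) {r : ℝ} (hr0 : 0 ≤ r) : F n r ≤ (1 + r) * Real.exp (1 - r) := by
  rcases le_total r 1 with hr | hr
  · have h : 1 ≤ Real.exp (1 - r) := Real.one_le_exp (by linarith)
    have := F_le_one n hr0
    nlinarith
  · rcases Nat.eq_zero_or_pos n with rfl | hn
    · simp only [F, Finset.range_zero, Finset.sum_empty, mul_zero]
      positivity
    · have hq : r * Real.exp (1 - r) ≤ 1 := by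
        rcases eq_or_ne r 1 with rfl | h
        · simp
        · exact (mul_exp_lt_one h).le
      calc F n r ≤ (r * Real.exp (1 - r)) ^ n := F_le_pow n hr
        _ ≤ r * Real.exp (1 - r) := pow_le_of_le_one (by positivity) hq hn.ne'
        _ ≤ (1 + r) * Real.exp (1 - r) := by gcongr; linarith

lemma integrableOn_dominating :
    IntegrableOn (fun r : ℝ => (1 + r) * Real.exp (1 - r)) (Set.Ioi 0) := by
  have h1 := Real.GammaIntegral_convergent (s := 1) one_pos
  have h2 := Real.GammaIntegral_convergent (s := 2) two_pos
  refine IntegrableOn.congr_fun ((h1.add h2).const_mul (Real.exp 1)) (fun r _ => ?_)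
    measurableSet_Ioi
  have h3 : (2 : ℝ) - 1 = 1 := by norm_num
  simp only [Pi.add_apply, h3, sub_self, Real.rpow_zero, Real.rpow_one]
  rw [sub_eq_add_neg, Real.exp_add]
  ring

/-- Pointwise limits of `F n`: `F n r → 1` for `0 < r < 1` and `F n r → 0` for `r > 1`;
consequently the laws of `Rₙ/n` (with densities `F n` on `(0,∞)`) converge weakly to the
uniform distribution on `[0,1]`. -/
theorem poisson_tail_limits_and_weak_convergence_to_uniform :
    (∀ r : ℝ, 0 < r → r < 1 → Tendsto (fun n : ℕ => F n r) atTop (nhds 1)) ∧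
    (∀ r : ℝ, 1 < r → Tendsto (fun n : ℕ => F n r) atTop (nhds 0)) ∧
    (∀ f : ℝ → ℝ, Continuous f → (∃ C, ∀ x, |f x| ≤ C) →
      Tendsto (fun n : ℕ => ∫ r in Set.Ioi (0 : ℝ), f r * F n r) atTop
        (nhds (∫ u in Set.Icc (0 : ℝ) 1, f u))) := by
  refine ⟨fun r => tendsto_F_one, fun r => tendsto_F_zero, ?_⟩
  rintro f hf ⟨C, hC⟩
  have hlim : ∫ u in Set.Icc (0 : ℝ) 1, f u
      = ∫ r in Set.Ioi (0 : ℝ), (Set.Iic 1).indicator f r := by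
    rw [setIntegral_indicator measurableSet_Iic, Set.Ioi_inter_Iic, integral_Icc_eq_integral_Ioc]
  rw [hlim]
  refine tendsto_integral_of_dominated_convergence
    (fun r => C * ((1 + r) * Real.exp (1 - r))) (fun n => ?_)
    (integrableOn_dominating.const_mul C) (fun n => ?_) ?_
  · have : Continuous fun r => f r * F n r := by
      unfold F
      fun_prop
    exact this.aestronglyMeasurable
  · refine (ae_restrict_iff' measurableSet_Ioi).2 (.of_forall fun r (hr : 0 < r) => ?_)
    rw [Real.norm_eq_abs, abs_mul, abs_of_nonneg (F_nonneg n hr.le)]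
    have h0 := F_nonneg n hr.le
    exact mul_le_mul (hC r) (F_le_dominating n hr.le) h0 ((abs_nonneg _).trans (hC r))
  · refine (ae_restrict_iff' measurableSet_Ioi).2 ?_
    have hne : ∀ᵐ r : ℝ, r ≠ 1 := Measure.ae_ne volume 1
    filter_upwards [hne] with r hr1 hr0
    rcases lt_or_gt_of_ne hr1 with h | h
    · rw [Set.indicator_of_mem (Set.mem_Iic.2 h.le)]
      simpa using (tendsto_F_one hr0 h).const_mul (f r)
    · rw [Set.indicator_of_notMem (by simpa using h)]
      simpa using (tendsto_F_zero h).const_mul (f r)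

end
end

section
/- For every integer n ≥ 1, ∫₀^∞ ∫₀^∞ e^{−(x+y)} (x − y)² Σ_{a=0}^{n−1} (xy)^a / (a!)² dx dy = n(n+1). Equivalently, if (X,Y) has joint probability density (1/n) e^{−(x+y)} Σ_{a=0}^{n−1} (xy)^a/(a! a!) on (0,∞)², then E[(X − Y)²] = n + 1, and hence (X − Y)/n → 0 in L² as n → ∞. -/
open MeasureTheory Filter

noncomputable section

/-!
The weight `e^{-(x+y)} (xy)^a / (a!)²` is the joint density of two independent Gamma(`a+1`)
variables, whose difference has second moment `2(a+1)`; summing over `a < n` gives `n(n+1)`.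
Concretely, expanding `(x - y)²` makes both iterated integrals linear combinations of the Gamma
integrals `∫₀^∞ e^{-t} t^k dt = k!`; `integral_sum_gamma` evaluates such combinations and is
applied first in `y`, then in `x`.
-/

lemma integrableOn_exp_neg_mul_pow (k : ℕ) :
    IntegrableOn (fun t : ℝ => Real.exp (-t) * t ^ k) (Set.Ioi 0) := by
  have h := Real.GammaIntegral_convergent (s := (k : ℝ) + 1) (by positivity)
  simpa using h

lemma integral_exp_neg_mul_pow (k : ℕ) :
    ∫ t in Set.Ioi (0 : ℝ), Real.exp (-t) * t ^ k = (k.factorial : ℝ) := by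
  have h := Real.Gamma_eq_integral (s := (k : ℝ) + 1) (by positivity)
  rw [Real.Gamma_nat_eq_factorial] at h
  simpa using h.symm

lemma integral_sum_gamma (n : ℕ) (A B C : ℕ → ℝ) :
    ∫ t in Set.Ioi (0 : ℝ), ∑ a ∈ Finset.range n,
        (A a * (Real.exp (-t) * t ^ a) + B a * (Real.exp (-t) * t ^ (a + 1))
          + C a * (Real.exp (-t) * t ^ (a + 2))) =
      ∑ a ∈ Finset.range n, (A a * (a.factorial : ℝ) + B a * ((a + 1).factorial : ℝ)
        + C a * ((a + 2).factorial : ℝ)) := by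
  have hi (c : ℝ) (k : ℕ) : Integrable (fun t : ℝ => c * (Real.exp (-t) * t ^ k))
      (volume.restrict (Set.Ioi 0)) := (integrableOn_exp_neg_mul_pow k).const_mul c
  rw [integral_finsetSum]
  swap
  · exact fun a _ => ((hi _ _).add (hi _ _)).add (hi _ _)
  refine Finset.sum_congr rfl fun a _ => ?_
  rw [integral_add _ (hi _ _), integral_add (hi _ _) (hi _ _)]
  swap
  · exact (hi _ _).add (hi _ _)
  simp only [integral_const_mul, integral_exp_neg_mul_pow]

/-- For the joint density `(1/n) e^{-(x+y)} ∑_{a<n} (xy)^a/(a!)²` on `(0,∞)²` (two coupled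
radial variables of a product of Ginibre matrices with equal sign exponents),
`E[(X-Y)²] = n+1`; equivalently
`∫∫ e^{-(x+y)} (x-y)² ∑_{a<n} (xy)^a/(a!)² dx dy = n(n+1)`. -/
theorem ginibre_radial_same_sign_second_moment (n : ℕ) (hn : 1 ≤ n) :
    (∫ x in Set.Ioi (0 : ℝ), ∫ y in Set.Ioi (0 : ℝ),
        Real.exp (-(x + y)) * (x - y) ^ 2 *
          ∑ a ∈ Finset.range n, (x * y) ^ a / ((a.factorial : ℝ) ^ 2)) =
      n * (n + 1) := by
  have inner (x : ℝ) : (∫ y in Set.Ioi (0 : ℝ), Real.exp (-(x + y)) * (x - y) ^ 2 *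
        ∑ a ∈ Finset.range n, (x * y) ^ a / ((a.factorial : ℝ) ^ 2)) =
      ∑ a ∈ Finset.range n,
        (((a + 2).factorial / (a.factorial : ℝ) ^ 2) * (Real.exp (-x) * x ^ a)
          + (-2 * (a + 1).factorial / (a.factorial : ℝ) ^ 2) * (Real.exp (-x) * x ^ (a + 1))
          + (a.factorial / (a.factorial : ℝ) ^ 2) * (Real.exp (-x) * x ^ (a + 2))) := by
    have h := integral_sum_gamma n
      (fun a => Real.exp (-x) * x ^ (a + 2) / (a.factorial : ℝ) ^ 2)
      (fun a => -2 * (Real.exp (-x) * x ^ (a + 1)) / (a.factorial : ℝ) ^ 2)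
      (fun a => Real.exp (-x) * x ^ a / (a.factorial : ℝ) ^ 2)
    convert h using 1
    · congr 1
      funext y
      rw [Finset.mul_sum]
      refine Finset.sum_congr rfl fun a _ => ?_
      rw [neg_add, Real.exp_add, mul_pow]
      ring
    · refine Finset.sum_congr rfl fun a _ => ?_
      ring
  simp only [inner]
  rw [integral_sum_gamma]
  have term (a : ℕ) : ((a + 2).factorial / (a.factorial : ℝ) ^ 2) * (a.factorial : ℝ)
      + (-2 * (a + 1).factorial / (a.factorial : ℝ) ^ 2) * ((a + 1).factorial : ℝ)
      + (a.factorial / (a.factorial : ℝ) ^ 2) * ((a + 2).factorial : ℝ) = 2 * (a + 1) := by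
    have : (a.factorial : ℝ) ≠ 0 := by positivity
    simp only [Nat.factorial_succ]
    push_cast
    field_simp
    ring
  simp only [term]
  clear hn inner
  induction n with
  | zero => simp
  | succ k ih =>
    rw [Finset.sum_range_succ, ih]
    push_cast
    ring

end
end
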